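/- arXiv:2407.12509 — 2 statements merged into one kernel-verified Lean document; each statement's English description precedes it below -/
import Mathlib

section
/- (Fundamental lemma, Proposition 1.) Let (A_true, B_true, C_true, D_true) be a minimal discrete-time linear system with n_true states, m inputs, p outputs, and lag ℓ_true ≥ 1, and let integers L and N satisfy ℓ_true ≤ L and n_true ≤ N. Suppose the data (u_{[0,t−1]}, y_{[0,t−1]}) are generated by this system and that the input sequence u_{[0,t−1]} is persistently exciting of order N + L + 1. Then rank H_{L,t} = (L+1)m + n_true. -/
/-!
Superposing time shifts of the data with weights `w ∈ ker H_L(u)` gives a trajectory with zero input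
on `[0, L]`, whose outputs are therefore `C A^r X w`, with `X = [x(0) ⋯ x(t-L-1)]`; that is,
`H_L(y) = Ω_L X` on `ker H_L(u)`. If `[X; H_L(u)]` has full row rank, it follows that
`rank H_{L,t} = (L+1)m + rank Ω_L`, and `rank Ω_L = n` for an observable system of lag at most `L`.

Full row rank means that no nonzero functional `(ξ, η) ↦ ξ ⬝ x(c) + ∑ r ≤ L, η r ⬝ u(c+r)` vanishes
for all `c`. One time step acts on such functionals by `T (ξ, η) = (ξ A, (ξ B, η 0, η 1, …))`. With
`χ` the characteristic polynomial of `A`, Cayley–Hamilton removes the state part of `χ(T) (ξ, η)`,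
and persistency of excitation then forces `χ(T) (ξ, η) = 0`. Since `T` delays `η` and `χ` is monic,
the last nonzero entry of an input part survives `χ(T)`, so every element of `ker χ(T)` has input
part zero. But `ker χ(T)` is `T`-invariant, and the input part of `T^(j+1) (ξ, η)` starts with
`ξ A^j B`; hence `ξ A^j B = 0` for all `j`, and controllability gives `ξ = 0`.
-/

open Matrix

/-- The Hankel matrix with `rows` block rows and `cols` columns built from the
vector sequence `f` (starting at time `0`): the block entry in block row `r` and
column `c` is `f (r + c)`.  Thus `H_k(f_{[0,t-1]}) = hankel f (k+1) (t-k)`. -/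
def hankel {d : ℕ} (f : ℕ → Fin d → ℝ) (rows cols : ℕ) :
    Matrix (Fin rows × Fin d) (Fin cols) ℝ :=
  Matrix.of fun r c => f ((r.1 : ℕ) + (c : ℕ)) r.2

/-- `u_{[0,t-1]}` is persistently exciting of order `k+1`, i.e. the Hankel
matrix `H_k(u_{[0,t-1]})` (with `k+1` block rows) has full row rank. -/
def PersistentlyExciting {m : ℕ} (u : ℕ → Fin m → ℝ) (t k : ℕ) : Prop :=
  (hankel u (k + 1) (t - k)).rank = (k + 1) * m

/-- The Hankel matrix `H_{k,t}`: `H_k(y_{[0,t-1]})` stacked on top of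
`H_k(u_{[0,t-1]})`. -/
def Hkt {m p : ℕ} (u : ℕ → Fin m → ℝ) (y : ℕ → Fin p → ℝ) (k t : ℕ) :
    Matrix ((Fin (k + 1) × Fin p) ⊕ (Fin (k + 1) × Fin m)) (Fin (t - k)) ℝ :=
  Matrix.fromRows (hankel y (k + 1) (t - k)) (hankel u (k + 1) (t - k))

/-- The matrix `G_{k,t}`: `H_{k-1}(y_{[0,t-2]})` (which has `k` block rows and
`t-k` columns) stacked on top of `H_k(u_{[0,t-1]})`. -/
def Gkt {m p : ℕ} (u : ℕ → Fin m → ℝ) (y : ℕ → Fin p → ℝ) (k t : ℕ) :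
    Matrix ((Fin k × Fin p) ⊕ (Fin (k + 1) × Fin m)) (Fin (t - k)) ℝ :=
  Matrix.fromRows (hankel y k (t - k)) (hankel u (k + 1) (t - k))

/-- `δ_{k,t} = rank H_{k,t} - rank G_{k,t}`. -/
noncomputable def deltaKT {m p : ℕ} (u : ℕ → Fin m → ℝ) (y : ℕ → Fin p → ℝ) (k t : ℕ) : ℕ :=
  (Hkt u y k t).rank - (Gkt u y k t).rank

/-- `q_t`: the smallest `k ∈ [0, t-1]` with `δ_{k,t} = 0`. -/
noncomputable def qT {m p : ℕ} (u : ℕ → Fin m → ℝ) (y : ℕ → Fin p → ℝ) (t : ℕ) : ℕ :=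
  sInf {k | k ≤ t - 1 ∧ deltaKT u y k t = 0}

/-- A discrete-time linear system `(A, B, C, D)` with `m` inputs, `p` outputs
and `n` states. -/
structure LinSys (m p : ℕ) where
  n : ℕ
  A : Matrix (Fin n) (Fin n) ℝ
  B : Matrix (Fin n) (Fin m) ℝ
  C : Matrix (Fin p) (Fin n) ℝ
  D : Matrix (Fin p) (Fin m) ℝ

/-- `obsMat sys k` is the observability matrix `Ω_{k-1}` with `k` block rows,
stacking `C, CA, ..., CA^(k-1)`. -/
def obsMat {m p : ℕ} (sys : LinSys m p) (k : ℕ) :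
    Matrix (Fin k × Fin p) (Fin sys.n) ℝ :=
  Matrix.of fun r j => (sys.C * sys.A ^ (r.1 : ℕ)) r.2 j

/-- The lag `ℓ(C,A)`: the smallest `k ≥ 0` with `rank Ω_k = rank Ω_{k-1}`. -/
noncomputable def lag {m p : ℕ} (sys : LinSys m p) : ℕ :=
  sInf {k | (obsMat sys (k + 1)).rank = (obsMat sys k).rank}

/-- The controllability matrix with `k` blocks `[B, AB, ..., A^(k-1)B]`. -/
def ctrlMat {m p : ℕ} (sys : LinSys m p) (k : ℕ) :
    Matrix (Fin sys.n) (Fin k × Fin m) ℝ :=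
  Matrix.of fun i c => (sys.A ^ (c.1 : ℕ) * sys.B) i c.2

def Observable {m p : ℕ} (sys : LinSys m p) : Prop :=
  (obsMat sys sys.n).rank = sys.n

def Controllable {m p : ℕ} (sys : LinSys m p) : Prop :=
  (ctrlMat sys sys.n).rank = sys.n

def MinimalSys {m p : ℕ} (sys : LinSys m p) : Prop :=
  Controllable sys ∧ Observable sys

/-- The system explains the data `(u_{[0,t-1]}, y_{[0,t-1]})` with the
compatible state sequence `x`. -/
def ExplainsWith {m p : ℕ} (sys : LinSys m p) (t : ℕ) (u : ℕ → Fin m → ℝ)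
    (y : ℕ → Fin p → ℝ) (x : ℕ → Fin sys.n → ℝ) : Prop :=
  ∀ s < t, x (s + 1) = sys.A.mulVec (x s) + sys.B.mulVec (u s) ∧
    y s = sys.C.mulVec (x s) + sys.D.mulVec (u s)

/-- The system explains (equivalently, generates) the data
`(u_{[0,t-1]}, y_{[0,t-1]})`. -/
def Explains {m p : ℕ} (sys : LinSys m p) (t : ℕ) (u : ℕ → Fin m → ℝ)
    (y : ℕ → Fin p → ℝ) : Prop :=
  ∃ x : ℕ → Fin sys.n → ℝ, ExplainsWith sys t u y x

/-- `ℰ_t`, the set of systems explaining the data. -/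
def ExplSet {m p : ℕ} (t : ℕ) (u : ℕ → Fin m → ℝ) (y : ℕ → Fin p → ℝ) :
    Set (LinSys m p) :=
  {sys | Explains sys t u y}

/-- `ℓ_min,t`: the smallest lag among explaining systems. -/
noncomputable def lMin {m p : ℕ} (t : ℕ) (u : ℕ → Fin m → ℝ) (y : ℕ → Fin p → ℝ) : ℕ :=
  sInf {ℓ | ∃ sys : LinSys m p, Explains sys t u y ∧ lag sys = ℓ}

/-- `n_min,t`: the smallest state dimension among explaining systems. -/
noncomputable def nMin {m p : ℕ} (t : ℕ) (u : ℕ → Fin m → ℝ) (y : ℕ → Fin p → ℝ) : ℕ :=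
  sInf {n | ∃ sys : LinSys m p, Explains sys t u y ∧ sys.n = n}

/-- Two systems are isomorphic: `D₁ = D₂` and there is an invertible state
transformation `S` with `S A₁ = A₂ S`, `S B₁ = B₂`, `C₁ = C₂ S`. -/
def Isomorphic {m p : ℕ} (s1 s2 : LinSys m p) : Prop :=
  s1.D = s2.D ∧ ∃ (S : Matrix (Fin s2.n) (Fin s1.n) ℝ)
    (S' : Matrix (Fin s1.n) (Fin s2.n) ℝ),
    S * S' = 1 ∧ S' * S = 1 ∧ S * s1.A = s2.A * S ∧ S * s1.B = s2.B ∧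
    s1.C = s2.C * S

/-- `M`, the set of minimal systems. -/
def Mset (m p : ℕ) : Set (LinSys m p) := {sys | MinimalSys sys}

/-- `S_{L,N}`, the set of systems with lag at most `L` and at most `N` states. -/
def SLN (m p L N : ℕ) : Set (LinSys m p) := {sys | lag sys ≤ L ∧ sys.n ≤ N}

/-- The data `(u_{[0,t-1]}, y_{[0,t-1]})` are informative for system
identification (with prior bounds `L`, `N`, and true state dimension `nTrue`). -/
def Informative {m p : ℕ} (t : ℕ) (u : ℕ → Fin m → ℝ) (y : ℕ → Fin p → ℝ)
    (nTrue L N : ℕ) : Prop :=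
  (ExplSet t u y ∩ Mset m p ∩ SLN m p L N =
      {sys ∈ ExplSet t u y | sys.n = nTrue} ∩ Mset m p ∩ SLN m p L N) ∧
  ∀ s1 ∈ ExplSet t u y ∩ Mset m p ∩ SLN m p L N,
    ∀ s2 ∈ ExplSet t u y ∩ Mset m p ∩ SLN m p L N, Isomorphic s1 s2

/-! ### Ranks and kernels -/

section Rank

variable {K α α' β : Type*} [Field K] [Fintype β]

lemma rank_add_finrank_ker_mulVecLin (M : Matrix α β K) :
    M.rank + Module.finrank K M.mulVecLin.ker = Fintype.card β := by
  rw [Matrix.rank, LinearMap.finrank_range_add_finrank_ker, Module.finrank_fintype_fun_eq_card]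

lemma rank_le_of_ker_mulVecLin_le {M : Matrix α β K} {M' : Matrix α' β K}
    (h : M.mulVecLin.ker ≤ M'.mulVecLin.ker) : M'.rank ≤ M.rank := by
  have hM := rank_add_finrank_ker_mulVecLin M
  have hM' := rank_add_finrank_ker_mulVecLin M'
  have := Submodule.finrank_mono h
  omega

lemma ker_mulVecLin_eq_of_le_of_rank_eq {M : Matrix α β K} {M' : Matrix α' β K}
    (h : M.mulVecLin.ker ≤ M'.mulVecLin.ker) (hrank : M.rank = M'.rank) :
    M.mulVecLin.ker = M'.mulVecLin.ker := by
  have hM := rank_add_finrank_ker_mulVecLin M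
  have hM' := rank_add_finrank_ker_mulVecLin M'
  exact Submodule.eq_of_le_of_finrank_eq h (by omega)

lemma rank_eq_card_width_iff {M : Matrix α β K} :
    M.rank = Fintype.card β ↔ ∀ z, M *ᵥ z = 0 → z = 0 := by
  rw [← Matrix.ker_mulVecLin_eq_bot_iff, ← Submodule.finrank_eq_zero (R := K)]
  have := rank_add_finrank_ker_mulVecLin M
  omega

lemma rank_eq_card_height_iff [Fintype α] {M : Matrix α β K} :
    M.rank = Fintype.card α ↔ ∀ w, w ᵥ* M = 0 → w = 0 := by
  rw [← Matrix.rank_transpose, rank_eq_card_width_iff]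
  simp only [Matrix.mulVec_transpose]

lemma mulVec_surjective_of_rank_eq_card [Fintype α] {M : Matrix α β K}
    (h : M.rank = Fintype.card α) : Function.Surjective M.mulVec :=
  LinearMap.range_eq_top.mp <| Submodule.eq_top_of_finrank_eq <|
    h.trans (Module.finrank_fintype_fun_eq_card K).symm

lemma rank_eq_card_of_mulVec_surjective [Fintype α] {M : Matrix α β K}
    (h : Function.Surjective M.mulVec) : M.rank = Fintype.card α := by
  rw [Matrix.rank, LinearMap.range_eq_top.mpr h, finrank_top, Module.finrank_fintype_fun_eq_card]

lemma mem_ker_mulVecLin_fromRows {M : Matrix α β K} {M' : Matrix α' β K} {z : β → K} :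
    z ∈ (Matrix.fromRows M M').mulVecLin.ker ↔ M *ᵥ z = 0 ∧ M' *ᵥ z = 0 := by
  rw [LinearMap.mem_ker, Matrix.mulVecLin_apply, Matrix.fromRows_mulVec,
    ← Sum.elim_zero_zero, Sum.elim_eq_iff]

lemma rank_fromRows (Y : Matrix α β K) (U : Matrix α' β K) :
    (Matrix.fromRows Y U).rank =
      U.rank + Module.finrank K (U.mulVecLin.ker.map Y.mulVecLin) := by
  have hker : (Y.mulVecLin.domRestrict U.mulVecLin.ker).ker.map U.mulVecLin.ker.subtype =
      (Matrix.fromRows Y U).mulVecLin.ker := by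
    ext z
    rw [mem_ker_mulVecLin_fromRows]
    simp
  have hY := (Y.mulVecLin.domRestrict U.mulVecLin.ker).finrank_range_add_finrank_ker
  rw [LinearMap.range_domRestrict, ← Submodule.finrank_map_subtype_eq, hker] at hY
  have hU := rank_add_finrank_ker_mulVecLin U
  have hYU := rank_add_finrank_ker_mulVecLin (Matrix.fromRows Y U)
  omega

lemma rank_fromRows_eq_card_add_rank {ν κ : Type*} [Fintype ν] [Fintype κ]
    {X : Matrix ν β K} {U : Matrix κ β K} {Y : Matrix α β K} {Ω : Matrix α ν K}
    (hXU : (Matrix.fromRows X U).rank = Fintype.card (ν ⊕ κ))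
    (hY : ∀ w, U *ᵥ w = 0 → Y *ᵥ w = Ω *ᵥ (X *ᵥ w)) :
    (Matrix.fromRows Y U).rank = Fintype.card κ + Ω.rank := by
  have hsolve : ∀ (z : ν → K) (v : κ → K), ∃ w, X *ᵥ w = z ∧ U *ᵥ w = v := fun z v => by
    obtain ⟨w, hw⟩ := mulVec_surjective_of_rank_eq_card hXU (Sum.elim z v)
    rw [Matrix.fromRows_mulVec, Sum.elim_eq_iff] at hw
    exact ⟨w, hw⟩
  have hU : U.rank = Fintype.card κ := rank_eq_card_of_mulVec_surjective fun v =>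
    (hsolve 0 v).imp fun _ => And.right
  have hmap : U.mulVecLin.ker.map Y.mulVecLin = Ω.mulVecLin.range := by
    ext b
    constructor
    · rintro ⟨w, hw, rfl⟩
      exact ⟨X *ᵥ w, (hY w hw).symm⟩
    · rintro ⟨z, rfl⟩
      obtain ⟨w, rfl, hw⟩ := hsolve z 0
      exact ⟨w, hw, hY w hw⟩
  rw [rank_fromRows, hU, hmap, Matrix.rank]

end Rank

/-! ### Observability and controllability -/

section Observability

variable {m p : ℕ} {sys : LinSys m p}

lemma mem_ker_obsMat {k : ℕ} {z : Fin sys.n → ℝ} :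
    z ∈ (obsMat sys k).mulVecLin.ker ↔ ∀ i < k, (sys.C * sys.A ^ i) *ᵥ z = 0 := by
  rw [LinearMap.mem_ker, Matrix.mulVecLin_apply]
  exact ⟨fun h i hi => funext fun a => congrFun h (⟨i, hi⟩, a),
    fun h => funext fun r => congrFun (h r.1 r.1.2) r.2⟩

lemma ker_obsMat_antitone : Antitone fun k => (obsMat sys k).mulVecLin.ker :=
  fun _ _ hjk _ hz => mem_ker_obsMat.mpr fun i hi => mem_ker_obsMat.mp hz i (hi.trans_le hjk)

lemma rank_obsMat_monotone : Monotone fun k => (obsMat sys k).rank :=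
  fun _ _ hjk => rank_le_of_ker_mulVecLin_le (ker_obsMat_antitone hjk)

lemma mem_ker_obsMat_succ {k : ℕ} {z : Fin sys.n → ℝ} :
    z ∈ (obsMat sys (k + 1)).mulVecLin.ker ↔
      sys.C *ᵥ z = 0 ∧ sys.A *ᵥ z ∈ (obsMat sys k).mulVecLin.ker := by
  simp only [mem_ker_obsMat, Nat.forall_lt_succ_left, pow_zero, Matrix.mul_one,
    Matrix.mulVec_mulVec, Matrix.mul_assoc, pow_succ]

lemma ker_obsMat_eq_of_stagnant {k j : ℕ}
    (h : (obsMat sys (k + 1)).mulVecLin.ker = (obsMat sys k).mulVecLin.ker) (hkj : k ≤ j) :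
    (obsMat sys j).mulVecLin.ker = (obsMat sys k).mulVecLin.ker := by
  induction j, hkj using Nat.le_induction with
  | base => rfl
  | succ j _ ih =>
    rw [← h]
    ext z
    rw [mem_ker_obsMat_succ, mem_ker_obsMat_succ, ih]

lemma Observable.rank_obsMat_eq (ho : Observable sys) {k : ℕ} (hk : sys.n ≤ k) :
    (obsMat sys k).rank = sys.n :=
  le_antisymm ((Matrix.rank_le_card_width _).trans_eq (Fintype.card_fin _))
    (ho.symm.trans_le (rank_obsMat_monotone hk))

lemma Observable.rank_obsMat_lag_succ (ho : Observable sys) :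
    (obsMat sys (lag sys + 1)).rank = (obsMat sys (lag sys)).rank :=
  Nat.sInf_mem (s := {k | (obsMat sys (k + 1)).rank = (obsMat sys k).rank})
    ⟨sys.n, (ho.rank_obsMat_eq (Nat.le_succ _)).trans ho.symm⟩

lemma Observable.rank_obsMat_eq_of_lag_le (ho : Observable sys) {k : ℕ} (hk : lag sys ≤ k) :
    (obsMat sys k).rank = sys.n := by
  have hstagnant := ker_mulVecLin_eq_of_le_of_rank_eq (ker_obsMat_antitone (Nat.le_succ _))
    ho.rank_obsMat_lag_succ
  have hker : (obsMat sys k).mulVecLin.ker = (obsMat sys (max k sys.n)).mulVecLin.ker := by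
    rw [ker_obsMat_eq_of_stagnant hstagnant hk,
      ker_obsMat_eq_of_stagnant hstagnant (hk.trans (le_max_left _ _))]
  refine Eq.trans ?_ (ho.rank_obsMat_eq (le_max_right k sys.n))
  exact le_antisymm (rank_le_of_ker_mulVecLin_le hker.ge) (rank_le_of_ker_mulVecLin_le hker.le)

lemma Controllable.eq_zero_of_vecMul_eq_zero (hc : Controllable sys) {ξ : Fin sys.n → ℝ}
    (h : ∀ j, (ξ ᵥ* sys.A ^ j) ᵥ* sys.B = 0) : ξ = 0 := by
  refine rank_eq_card_height_iff.mp (hc.trans (Fintype.card_fin _).symm) ξ ?_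
  ext ⟨j, a⟩
  have := congrFun (h j) a
  rwa [Matrix.vecMul_vecMul] at this

end Observability

/-! ### The time shift on annihilators -/

section TimeShift

variable {R ν μ : Type*} [CommRing R] [Fintype ν]

/-- The pair `(ξ, η)` stands for the functional `ξ ⬝ x(c) + ∑ r, η r ⬝ u(c+r)` of a trajectory of
`x(s+1) = A x(s) + B u(s)`; `timeShift A B` sends it to the pair `(ξ A, (ξ B, η 0, η 1, …))`
standing for the same functional one time step later. -/
noncomputable def timeShift (A : Matrix ν ν R) (B : Matrix ν μ R) :
    Module.End R ((ν → R) × (ℕ →₀ μ → R)) where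
  toFun v := (v.1 ᵥ* A, Finsupp.single 0 (v.1 ᵥ* B) + v.2.mapDomain Nat.succ)
  map_add' v w := by
    ext1
    · exact Matrix.add_vecMul A v.1 w.1
    · simp only [Prod.fst_add, Prod.snd_add, Matrix.add_vecMul, Finsupp.single_add,
        Finsupp.mapDomain_add]
      abel
  map_smul' a v := by
    ext1
    · exact Matrix.smul_vecMul a v.1 A
    · simp [Matrix.smul_vecMul, Finsupp.mapDomain_smul]

variable {A : Matrix ν ν R} {B : Matrix ν μ R} {v : (ν → R) × (ℕ →₀ μ → R)}

lemma timeShift_fst : (timeShift A B v).1 = v.1 ᵥ* A := rfl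

lemma timeShift_snd :
    (timeShift A B v).2 = Finsupp.single 0 (v.1 ᵥ* B) + v.2.mapDomain Nat.succ := rfl

lemma timeShift_snd_zero : (timeShift A B v).2 0 = v.1 ᵥ* B := by
  simp [timeShift_snd, Finsupp.mapDomain_of_notMem_range]

lemma timeShift_snd_succ (i : ℕ) : (timeShift A B v).2 (i + 1) = v.2 i := by
  simp [timeShift_snd, Finsupp.mapDomain_apply Nat.succ_injective v.2 i]

lemma timeShift_pow_succ_apply (k : ℕ) :
    (timeShift A B ^ (k + 1)) v = timeShift A B ((timeShift A B ^ k) v) := by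
  rw [pow_succ', Module.End.mul_apply]

lemma timeShift_pow_snd_add (k i : ℕ) : ((timeShift A B ^ k) v).2 (i + k) = v.2 i := by
  induction k with
  | zero => rfl
  | succ k ih => rw [timeShift_pow_succ_apply, ← add_assoc, timeShift_snd_succ, ih]

lemma timeShift_pow_snd_mem_supported {l : ℕ} (hv : v.2 ∈ Finsupp.supported (μ → R) R (Set.Iio l))
    (k : ℕ) : ((timeShift A B ^ k) v).2 ∈ Finsupp.supported (μ → R) R (Set.Iio (l + k)) := by
  rw [Finsupp.mem_supported'] at hv ⊢
  intro i hi
  rw [Set.mem_Iio, not_lt] at hi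
  obtain ⟨j, rfl⟩ := Nat.exists_eq_add_of_le' ((Nat.le_add_left k l).trans hi)
  rw [timeShift_pow_snd_add]
  exact hv j (by simpa using hi)

lemma aeval_timeShift_apply (q : Polynomial R) :
    Polynomial.aeval (timeShift A B) q v =
      ∑ k ∈ Finset.range (q.natDegree + 1), q.coeff k • (timeShift A B ^ k) v := by
  rw [Polynomial.aeval_eq_sum_range, LinearMap.sum_apply]
  rfl

lemma aeval_timeShift_snd_mem_supported {l : ℕ}
    (hv : v.2 ∈ Finsupp.supported (μ → R) R (Set.Iio l)) (q : Polynomial R) :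
    (Polynomial.aeval (timeShift A B) q v).2 ∈
      Finsupp.supported (μ → R) R (Set.Iio (l + q.natDegree)) := by
  rw [aeval_timeShift_apply, Prod.snd_sum]
  refine Submodule.sum_mem _ fun k hk => Submodule.smul_mem _ _ ?_
  rw [Finset.mem_range, Nat.lt_succ_iff] at hk
  exact Finsupp.supported_mono (Set.Iio_subset_Iio (Nat.add_le_add_left hk l))
    (timeShift_pow_snd_mem_supported hv k)

lemma aeval_timeShift_snd_add_natDegree {q : Polynomial R} (hq : q.Monic) {i : ℕ}
    (hv : ∀ j > i, v.2 j = 0) :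
    (Polynomial.aeval (timeShift A B) q v).2 (i + q.natDegree) = v.2 i := by
  rw [aeval_timeShift_apply, Finset.sum_range_succ, hq.coeff_natDegree, one_smul, Prod.snd_add,
    Finsupp.add_apply, timeShift_pow_snd_add, Prod.snd_sum, Finsupp.finsetSum_apply,
    add_eq_right]
  refine Finset.sum_eq_zero fun k hk => ?_
  rw [Finset.mem_range] at hk
  rw [Prod.smul_snd, Finsupp.smul_apply, show i + q.natDegree = i + (q.natDegree - k) + k by omega,
    timeShift_pow_snd_add, hv _ (by omega), smul_zero]

lemma snd_eq_zero_of_aeval_timeShift_eq_zero {q : Polynomial R} (hq : q.Monic)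
    (h : Polynomial.aeval (timeShift A B) q v = 0) : v.2 = 0 := by
  by_contra hne
  have hsupp := Finsupp.support_nonempty_iff.mpr hne
  have hlast : ∀ j > v.2.support.max' hsupp, v.2 j = 0 := fun j hj =>
    Finsupp.notMem_support_iff.mp fun hmem => hj.not_ge (v.2.support.le_max' j hmem)
  have htop := aeval_timeShift_snd_add_natDegree (A := A) (B := B) hq hlast
  rw [h] at htop
  exact Finsupp.mem_support_iff.mp (v.2.support.max'_mem hsupp) htop.symm

variable [DecidableEq ν]

lemma timeShift_pow_fst (k : ℕ) : ((timeShift A B ^ k) v).1 = v.1 ᵥ* A ^ k := by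
  induction k with
  | zero => simp
  | succ k ih => rw [timeShift_pow_succ_apply, timeShift_fst, ih, Matrix.vecMul_vecMul, pow_succ]

lemma aeval_timeShift_fst (q : Polynomial R) :
    (Polynomial.aeval (timeShift A B) q v).1 = v.1 ᵥ* Polynomial.aeval A q := by
  rw [aeval_timeShift_apply, Prod.fst_sum, Polynomial.aeval_eq_sum_range, Matrix.vecMul_sum]
  refine Finset.sum_congr rfl fun k _ => ?_
  rw [Matrix.vecMul_smul, Prod.smul_fst, timeShift_pow_fst]

/-- The kernel of `q(T)`, with `T` the time shift, is `T`-invariant and consists of pairs `(ξ, 0)`;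
the input part of `T ^ (j + 1) (ξ, 0)` starts with `ξ A ^ j B`. -/
lemma vecMul_pow_eq_zero_of_aeval_timeShift_eq_zero {q : Polynomial R} (hq : q.Monic)
    (h : Polynomial.aeval (timeShift A B) q v = 0) (j : ℕ) : (v.1 ᵥ* A ^ j) ᵥ* B = 0 := by
  have hinv : Polynomial.aeval (timeShift A B) q ((timeShift A B ^ (j + 1)) v) = 0 := by
    rw [← Polynomial.aeval_X_pow (R := R), ← Module.End.mul_apply, ← map_mul, mul_comm, map_mul,
      Module.End.mul_apply, h, map_zero]
  have hzero := DFunLike.congr_fun (snd_eq_zero_of_aeval_timeShift_eq_zero hq hinv) 0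
  rwa [timeShift_pow_succ_apply, timeShift_snd_zero, timeShift_pow_fst] at hzero

end TimeShift

section EvalAt

variable {R ν μ : Type*} [CommRing R] [Fintype ν] [Fintype μ]

/-- The value at time `c`, along the state and input sequences `x` and `u`, of the functional
`ξ ⬝ x(c) + ∑ r, η r ⬝ u(c+r)` that a pair `(ξ, η)` stands for. -/
noncomputable def evalAt (x : ℕ → ν → R) (u : ℕ → μ → R) (c : ℕ) :
    ((ν → R) × (ℕ →₀ μ → R)) →ₗ[R] R :=
  (Fintype.linearCombination R (x c)).coprod
    (Finsupp.lsum R fun r => Fintype.linearCombination R (u (r + c)))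

variable {x : ℕ → ν → R} {u : ℕ → μ → R} {c : ℕ} {A : Matrix ν ν R} {B : Matrix ν μ R}

lemma evalAt_apply (v : (ν → R) × (ℕ →₀ μ → R)) :
    evalAt x u c v = v.1 ⬝ᵥ x c + v.2.sum fun r a => a ⬝ᵥ u (r + c) := rfl

lemma evalAt_timeShift (hx : x (c + 1) = A *ᵥ x c + B *ᵥ u c)
    (v : (ν → R) × (ℕ →₀ μ → R)) :
    evalAt x u c (timeShift A B v) = evalAt x u (c + 1) v := by
  have hshift : ((timeShift A B v).2.sum fun r a => a ⬝ᵥ u (r + c)) =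
      (v.1 ᵥ* B) ⬝ᵥ u c + v.2.sum fun r a => a ⬝ᵥ u (r + (c + 1)) := by
    simp [timeShift_snd, Finsupp.sum_add_index', Finsupp.sum_mapDomain_index, add_dotProduct,
      Nat.succ_add_eq_add_succ]
  rw [evalAt_apply, evalAt_apply, hshift, timeShift_fst, hx, dotProduct_add,
    Matrix.dotProduct_mulVec, Matrix.dotProduct_mulVec, add_assoc]

lemma evalAt_timeShift_pow {k : ℕ} (hx : ∀ s < c + k, x (s + 1) = A *ᵥ x s + B *ᵥ u s)
    (v : (ν → R) × (ℕ →₀ μ → R)) :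
    evalAt x u c ((timeShift A B ^ k) v) = evalAt x u (c + k) v := by
  induction k generalizing v with
  | zero => rfl
  | succ k ih =>
    rw [pow_succ, Module.End.mul_apply, ih (fun s hs => hx s (by omega)),
      evalAt_timeShift (hx (c + k) (by omega)), add_assoc]

end EvalAt

/-! ### Full row rank of the state-input matrix -/

section StateInput

variable {n m p : ℕ}

lemma vecMul_hankel_eq_finsuppSum {rows cols : ℕ} (f : ℕ → Fin m → ℝ) {η : ℕ →₀ Fin m → ℝ}
    (hη : η ∈ Finsupp.supported (Fin m → ℝ) ℝ (Set.Iio rows)) (c : Fin cols) :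
    ((fun i : Fin rows × Fin m => η i.1 i.2) ᵥ* hankel f rows cols) c =
      η.sum fun r a => a ⬝ᵥ f (r + c) := by
  have hsupp : η.support ⊆ Finset.range rows := fun r hr =>
    Finset.mem_range.mpr ((Finsupp.mem_supported ℝ η).mp hη hr)
  rw [Finsupp.sum_of_support_subset η hsupp (fun r a => a ⬝ᵥ f (r + c))
    fun _ _ => zero_dotProduct _, Finset.sum_range]
  simp only [Matrix.vecMul, dotProduct, hankel, Matrix.of_apply, Fintype.sum_prod_type]

lemma PersistentlyExciting.eq_zero {u : ℕ → Fin m → ℝ} {t k : ℕ}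
    (hpe : PersistentlyExciting u t k) {η : ℕ →₀ Fin m → ℝ}
    (hη : η ∈ Finsupp.supported (Fin m → ℝ) ℝ (Set.Iio (k + 1)))
    (h : ∀ c < t - k, (η.sum fun r a => a ⬝ᵥ u (r + c)) = 0) : η = 0 := by
  have hrank : (hankel u (k + 1) (t - k)).rank = Fintype.card (Fin (k + 1) × Fin m) := by
    simpa only [Fintype.card_prod, Fintype.card_fin] using! hpe
  have hrows := rank_eq_card_height_iff.mp hrank (fun i => η i.1 i.2) <| funext fun c =>
    (vecMul_hankel_eq_finsuppSum u hη c).trans (h c c.2)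
  ext r a
  by_cases hr : r < k + 1
  · exact congrFun hrows (⟨r, hr⟩, a)
  · rw [(Finsupp.mem_supported' ℝ η).mp hη r hr, Finsupp.zero_apply]

/-- By Cayley–Hamilton, applying the characteristic polynomial of `A` to the time shift turns the
functional `v` into one of the inputs alone, which persistency of excitation forces to vanish. -/
lemma Controllable.eq_zero_of_evalAt_eq_zero {sys : LinSys m p} (hc : Controllable sys)
    {L N t : ℕ} (hN : sys.n ≤ N) {u : ℕ → Fin m → ℝ} {y : ℕ → Fin p → ℝ}
    {x : ℕ → Fin sys.n → ℝ} (hx : ExplainsWith sys t u y x)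
    (hpe : PersistentlyExciting u t (N + L)) {v : (Fin sys.n → ℝ) × (ℕ →₀ Fin m → ℝ)}
    (hv : v.2 ∈ Finsupp.supported (Fin m → ℝ) ℝ (Set.Iio (L + 1)))
    (h : ∀ c < t - L, evalAt x u c v = 0) : v = 0 := by
  set T := timeShift sys.A sys.B
  set χ := sys.A.charpoly
  have hdeg : χ.natDegree = sys.n := by simp [χ]
  have hstate : (Polynomial.aeval T χ v).1 = 0 := by
    rw [aeval_timeShift_fst, Matrix.aeval_self_charpoly, Matrix.vecMul_zero]
  have heval : ∀ c < t - (N + L), evalAt x u c (Polynomial.aeval T χ v) = 0 := fun c hct => by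
    rw [aeval_timeShift_apply, map_sum]
    refine Finset.sum_eq_zero fun k hk => ?_
    rw [Finset.mem_range, hdeg] at hk
    rw [map_smul, evalAt_timeShift_pow (fun s hs => (hx s (by omega)).1), h _ (by omega), smul_zero]
  have hinput : (Polynomial.aeval T χ v).2 = 0 := by
    refine hpe.eq_zero (Finsupp.supported_mono (Set.Iio_subset_Iio (by omega))
      (aeval_timeShift_snd_mem_supported hv χ)) fun c hct => ?_
    rw [← heval c hct, evalAt_apply, hstate, zero_dotProduct, zero_add]
  have hχ : Polynomial.aeval T χ v = 0 := Prod.ext hstate hinput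
  exact Prod.ext
    (hc.eq_zero_of_vecMul_eq_zero <|
      vecMul_pow_eq_zero_of_aeval_timeShift_eq_zero sys.A.charpoly_monic hχ)
    (snd_eq_zero_of_aeval_timeShift_eq_zero sys.A.charpoly_monic hχ)

/-- The matrix `[x(0) ⋯ x(cols-1)]`. -/
def stateMat (x : ℕ → Fin n → ℝ) (cols : ℕ) : Matrix (Fin n) (Fin cols) ℝ :=
  Matrix.of fun i c => x c i

lemma Controllable.rank_fromRows_stateMat_hankel {sys : LinSys m p} (hc : Controllable sys)
    {L N t : ℕ} (hN : sys.n ≤ N) {u : ℕ → Fin m → ℝ} {y : ℕ → Fin p → ℝ}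
    {x : ℕ → Fin sys.n → ℝ} (hx : ExplainsWith sys t u y x)
    (hpe : PersistentlyExciting u t (N + L)) :
    (Matrix.fromRows (stateMat x (t - L)) (hankel u (L + 1) (t - L))).rank =
      Fintype.card (Fin sys.n ⊕ Fin (L + 1) × Fin m) := by
  refine rank_eq_card_height_iff.mpr fun w hw => ?_
  obtain ⟨η, hη, hηw⟩ : ∃ η ∈ Finsupp.supported (Fin m → ℝ) ℝ (Set.Iio (L + 1)),
      (fun i : Fin (L + 1) × Fin m => η i.1 i.2) = w ∘ Sum.inr := by
    refine ⟨(Finsupp.equivFunOnFinite.symm fun r a => w (Sum.inr (r, a))).embDomain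
      Fin.valEmbedding, (Finsupp.mem_supported' ℝ _).mpr fun r hr =>
        Finsupp.embDomain_of_notMem_range _ _ _ ?_, ?_⟩
    · rintro ⟨i, rfl⟩
      exact hr i.2
    · ext ⟨r, a⟩
      exact congrFun (Finsupp.embDomain_apply_self Fin.valEmbedding _ r) a
  have hzero : ((w ∘ Sum.inl, η) : (Fin sys.n → ℝ) × (ℕ →₀ Fin m → ℝ)) = 0 := by
    refine hc.eq_zero_of_evalAt_eq_zero hN hx hpe hη fun c hct => ?_
    rw [evalAt_apply, ← vecMul_hankel_eq_finsuppSum u hη ⟨c, hct⟩, hηw]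
    rw [Matrix.vecMul_fromRows] at hw
    exact congrFun hw ⟨c, hct⟩
  obtain ⟨hξ, rfl⟩ := Prod.mk_eq_zero.mp hzero
  rw [← Sum.elim_comp_inl_inr w, hξ, ← hηw]
  ext (i | i) <;> rfl

end StateInput

/-! ### Superposition of shifted trajectories -/

section Superposition

variable {d n m p cols : ℕ} {w : Fin cols → ℝ}

/-- The linear combination with weights `w` of the first `cols` time shifts of the sequence `f`. -/
def shiftComb (w : Fin cols → ℝ) (f : ℕ → Fin d → ℝ) (s : ℕ) : Fin d → ℝ :=
  ∑ c, w c • f (s + c)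

lemma hankel_mulVec_apply {rows : ℕ} (f : ℕ → Fin d → ℝ) (i : Fin rows × Fin d) :
    (hankel f rows cols *ᵥ w) i = shiftComb w f i.1 i.2 := by
  simp [Matrix.mulVec, dotProduct, hankel, shiftComb, mul_comm]

lemma stateMat_mulVec (x : ℕ → Fin n → ℝ) : stateMat x cols *ᵥ w = shiftComb w x 0 := by
  ext i
  simp [Matrix.mulVec, dotProduct, stateMat, shiftComb, mul_comm]

lemma shiftComb_eq_mulVec_add_mulVec {d₁ d₂ : ℕ} {f : ℕ → Fin d → ℝ} {g : ℕ → Fin d₁ → ℝ}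
    {h : ℕ → Fin d₂ → ℝ} {M : Matrix (Fin d) (Fin d₁) ℝ} {M' : Matrix (Fin d) (Fin d₂) ℝ}
    {s s' : ℕ} (hf : ∀ c : Fin cols, f (s' + c) = M *ᵥ g (s + c) + M' *ᵥ h (s + c)) :
    shiftComb w f s' = M *ᵥ shiftComb w g s + M' *ᵥ shiftComb w h s := by
  simp only [shiftComb, hf, smul_add, Finset.sum_add_distrib, Matrix.mulVec_sum,
    Matrix.mulVec_smul]

variable {sys : LinSys m p} {t : ℕ} {u : ℕ → Fin m → ℝ} {y : ℕ → Fin p → ℝ}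
  {x : ℕ → Fin sys.n → ℝ}

lemma ExplainsWith.superposition (hx : ExplainsWith sys t u y x) {k : ℕ}
    (hk : ∀ s < k, ∀ c < cols, s + c < t) (w : Fin cols → ℝ) :
    ExplainsWith sys k (shiftComb w u) (shiftComb w y) (shiftComb w x) := by
  refine fun s hs => ⟨shiftComb_eq_mulVec_add_mulVec fun c => ?_,
    shiftComb_eq_mulVec_add_mulVec fun c => (hx _ (hk s hs c c.2)).2⟩
  rw [Nat.add_right_comm]
  exact (hx _ (hk s hs c c.2)).1

lemma ExplainsWith.output_eq_of_input_eq_zero (hx : ExplainsWith sys t u y x)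
    (hu : ∀ s < t, u s = 0) {s : ℕ} (hs : s < t) : y s = (sys.C * sys.A ^ s) *ᵥ x 0 := by
  have hstate : ∀ r ≤ s, x r = sys.A ^ r *ᵥ x 0 := by
    intro r hr
    induction r with
    | zero => simp
    | succ r ih =>
      rw [(hx r (by omega)).1, hu r (by omega), Matrix.mulVec_zero, add_zero, ih (by omega),
        Matrix.mulVec_mulVec, pow_succ']
  rw [(hx s hs).2, hu s hs, Matrix.mulVec_zero, add_zero, hstate s le_rfl, Matrix.mulVec_mulVec]

lemma ExplainsWith.hankel_mulVec_eq (hx : ExplainsWith sys t u y x) {k : ℕ}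
    (hk : ∀ s < k, ∀ c < cols, s + c < t) (hu : hankel u k cols *ᵥ w = 0) :
    hankel y k cols *ᵥ w = obsMat sys k *ᵥ (stateMat x cols *ᵥ w) := by
  have hinput : ∀ s < k, shiftComb w u s = 0 := fun s hs => funext fun a => by
    rw [← hankel_mulVec_apply u (⟨s, hs⟩, a), hu, Pi.zero_apply, Pi.zero_apply]
  ext i
  rw [hankel_mulVec_apply, stateMat_mulVec,
    (hx.superposition hk w).output_eq_of_input_eq_zero hinput i.1.2]
  rfl

end Superposition

theorem fundamental_lemma_general {m p : ℕ} {sys : LinSys m p} (hc : Controllable sys)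
    {L N t : ℕ} (hN : sys.n ≤ N) {u : ℕ → Fin m → ℝ} {y : ℕ → Fin p → ℝ}
    (hdata : Explains sys t u y) (hpe : PersistentlyExciting u t (N + L)) :
    (Hkt u y L t).rank = (L + 1) * m + (obsMat sys (L + 1)).rank := by
  obtain ⟨x, hx⟩ := hdata
  have hfull := hc.rank_fromRows_stateMat_hankel hN hx hpe
  have houtput : ∀ w, hankel u (L + 1) (t - L) *ᵥ w = 0 →
      hankel y (L + 1) (t - L) *ᵥ w = obsMat sys (L + 1) *ᵥ (stateMat x (t - L) *ᵥ w) :=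
    fun _ => hx.hankel_mulVec_eq (by omega)
  simpa [Hkt] using rank_fromRows_eq_card_add_rank hfull houtput

/-- **Proposition 1 (fundamental lemma).** If the minimal true system (with lag
`ℓ_true ≥ 1`, `ℓ_true ≤ L`, `n_true ≤ N`) generates the data and `u_{[0,t-1]}`
is persistently exciting of order `N + L + 1`, then
`rank H_{L,t} = (L+1)m + n_true`. -/
theorem fundamental_lemma {m p : ℕ} (hm : 1 ≤ m) (hp : 1 ≤ p)
    (sysT : LinSys m p) (hmin : MinimalSys sysT) (hlag : 1 ≤ lag sysT)
    (L N t : ℕ) (hL : lag sysT ≤ L) (hN : sysT.n ≤ N)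
    (u : ℕ → Fin m → ℝ) (y : ℕ → Fin p → ℝ)
    (hdata : Explains sysT t u y)
    (hpe : PersistentlyExciting u t (N + L)) :
    (Hkt u y L t).rank = (L + 1) * m + sysT.n := by
  rw [fundamental_lemma_general hmin.1 hN hdata hpe,
    hmin.2.rank_obsMat_eq_of_lag_le (hL.trans (Nat.le_succ L))]
end

section
/- (Theorem 1, characterization of informativity.) Let the data (u_{[0,t−1]}, y_{[0,t−1]}) with u_{[0,t−1]} ≠ 0 be generated by a minimal true system with n_true states and lag ℓ_true, and let L, N satisfy ℓ_true ≤ L and n_true ≤ N. Then the data are informative for system identification if and only if both of the following hold: (i) t ≥ L_t^a + (L_t^a + 1)m + n_min,t, and (ii) rank H_{L_t^a,t} = (L_t^a + 1)m + n_min,t, where L_t^a := min(L, N − n_min,t + ℓ_min,t). -/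
/-!
Sufficiency. If the Hankel matrix of depth `k` has the rank in the theorem, then the windows
`(x s, u s, …, u (s + k))` along the data span everything. The trajectories of length `k + 1` of any
other explaining system then contain all those of a minimal one, and if its lag is at most `k`,
gluing windows gives the same for trajectories of every length. Hence the Markov parameters agree,
and minimal systems with the same Markov parameters are isomorphic.

Necessity. If the windows of length `lag + d + 1` do not span, a nonzero functional annihilates
them. Append a state that does not influence the output and is driven by this functional, read as a
polynomial in the shift `σ`: the remainder modulo `σ - r` enters the appended state, and the
quotient is an annihilator of the extended system that looks one step less into the future. For
suitable `r` the extended system is controllable. After `d` such steps the annihilator looks `lag`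
steps ahead. Its value vanishes along the data, so it may be fed back into the system through a
channel whose first effect on the output occurs only after `lag` steps, which keeps the feedback
causal. A small such feedback preserves controllability, makes the appended states observable and
changes the Markov parameters; so there is a second minimal explaining system, within the bounds if
`lag + d ≤ L` and `n + d ≤ N`.
-/

open Matrix

open Finset.HasAntidiagonal (antidiagonal mem_antidiagonal antidiagonal.fst_le)

/-! ### State-space systems -/

/-- A discrete-time linear system with state space `X`, inputs in `U` and outputs in `Y`. The
coefficients are linear maps, so that cascades, feedback and changes of coordinates need no
bases. -/
@[ext]
structure StateSpace (K U X Y : Type*) [Field K] [AddCommGroup U] [Module K U]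
    [AddCommGroup X] [Module K X] [AddCommGroup Y] [Module K Y] where
  A : Module.End K X
  B : U →ₗ[K] X
  C : X →ₗ[K] Y
  D : U →ₗ[K] Y

namespace StateSpace

variable {K U X Y : Type*} [Field K] [AddCommGroup U] [Module K U]
  [AddCommGroup X] [Module K X] [AddCommGroup Y] [Module K Y] (S : StateSpace K U X Y)

/-- The state at a given time, as a linear function of the initial state and the input sequence. -/
def state : ℕ → X × (ℕ → U) →ₗ[K] X
  | 0 => LinearMap.fst K X (ℕ → U)
  | s + 1 => S.A ∘ₗ state s + S.B ∘ₗ LinearMap.proj s ∘ₗ LinearMap.snd K X (ℕ → U)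

/-- The output at a given time, as a linear function of the initial state and the input sequence. -/
def output (s : ℕ) : X × (ℕ → U) →ₗ[K] Y :=
  S.C ∘ₗ S.state s + S.D ∘ₗ LinearMap.proj s ∘ₗ LinearMap.snd K X (ℕ → U)

/-- The Markov parameters `D, CB, CAB, …`, i.e. the impulse response. -/
def markov : ℕ → U →ₗ[K] Y
  | 0 => S.D
  | i + 1 => S.C ∘ₗ (S.A ^ i) ∘ₗ S.B

/-- The output sequence `C x, C A x, C A² x, …` under zero input. -/
def freeResponse : X →ₗ[K] (ℕ → Y) :=
  LinearMap.pi fun i => S.C ∘ₗ (S.A ^ i)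

/-- From the initial state `x`, the input `u` produces the output `y` at all times before `t`. -/
def Generates (x : X) (t : ℕ) (u : ℕ → U) (y : ℕ → Y) : Prop :=
  ∀ s < t, S.output s (x, u) = y s

@[simp] lemma state_zero (z : X × (ℕ → U)) : S.state 0 z = z.1 := rfl

lemma state_succ (s : ℕ) (z : X × (ℕ → U)) :
    S.state (s + 1) z = S.A (S.state s z) + S.B (z.2 s) := rfl

lemma output_apply (s : ℕ) (z : X × (ℕ → U)) : S.output s z = S.C (S.state s z) + S.D (z.2 s) := rfl

@[simp] lemma markov_zero : S.markov 0 = S.D := rfl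

lemma freeResponse_apply (x : X) (i : ℕ) : S.freeResponse x i = S.C ((S.A ^ i) x) := rfl

lemma markov_succ_apply (i : ℕ) (w : U) : S.markov (i + 1) w = S.freeResponse (S.B w) i := rfl

lemma freeResponse_A (x : X) (i : ℕ) : S.freeResponse (S.A x) i = S.freeResponse x (i + 1) := by
  rw [freeResponse_apply, freeResponse_apply, pow_succ, Module.End.mul_apply]

lemma freeResponse_A_pow (j : ℕ) (x : X) (i : ℕ) :
    S.freeResponse ((S.A ^ j) x) i = S.freeResponse x (i + j) := by
  rw [freeResponse_apply, freeResponse_apply, pow_add, Module.End.mul_apply]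

lemma state_shift (s r : ℕ) (x : X) (u : ℕ → U) :
    S.state (s + r) (x, u) = S.state r (S.state s (x, u), fun i => u (s + i)) := by
  induction r with
  | zero => rfl
  | succ r ih => rw [← add_assoc, state_succ, state_succ, ih]

lemma output_shift (s r : ℕ) (x : X) (u : ℕ → U) :
    S.output (s + r) (x, u) = S.output r (S.state s (x, u), fun i => u (s + i)) := by
  rw [output_apply, output_apply, state_shift]

lemma output_eq (s : ℕ) (x : X) (u : ℕ → U) :
    S.output s (x, u) =
      S.freeResponse x s + ∑ ij ∈ antidiagonal s, S.markov ij.1 (u ij.2) := by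
  induction s generalizing x u with
  | zero => simp [output_apply, freeResponse_apply]
  | succ s ih =>
    rw [add_comm s 1, output_shift, ih, state_succ, map_add, add_comm 1 s,
      Finset.Nat.sum_antidiagonal_succ', Pi.add_apply]
    simp only [state_zero, freeResponse_A, markov_succ_apply, add_comm 1]
    abel

lemma state_eq_add (s : ℕ) (x : X) (u : ℕ → U) :
    S.state s (x, u) = (S.A ^ s) x + S.state s (0, u) := by
  induction s with
  | zero => exact (add_zero x).symm
  | succ s ih =>
    rw [state_succ, state_succ, ih, map_add, pow_succ', Module.End.mul_apply, add_assoc]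

lemma state_congr {s : ℕ} {u v : ℕ → U} (x : X) (h : ∀ i < s, u i = v i) :
    S.state s (x, u) = S.state s (x, v) := by
  induction s with
  | zero => rfl
  | succ s ih => simp only [state_succ, ih fun i hi => h i (by lia), h s (by lia)]

lemma output_congr {s : ℕ} {u v : ℕ → U} (x : X) (h : ∀ i ≤ s, u i = v i) :
    S.output s (x, u) = S.output s (x, v) := by
  simp only [output_apply, S.state_congr x fun i hi => h i hi.le, h s le_rfl]

lemma output_zero_right (s : ℕ) (x : X) : S.output s (x, 0) = S.freeResponse x s := by
  simp [output_eq]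

lemma output_single_of_lt {i k : ℕ} (h : i < k) (x : X) (w : U) :
    S.output i (x, Pi.single k w) = S.freeResponse x i := by
  rw [← output_zero_right]
  exact S.output_congr x fun j hj => by simp [(hj.trans_lt h).ne]

lemma output_single_add (k i : ℕ) (w : U) :
    S.output (k + i) (0, Pi.single k w) = S.markov i w := by
  rw [output_eq, Finset.sum_eq_single (i, k)]
  · simp
  · rintro ⟨a, b⟩ hab hne
    have hb : b ≠ k := by
      rintro rfl
      simp_all [add_comm]
    simp [Pi.single_eq_of_ne hb]
  · simp [add_comm]

/-- The observability map `x ↦ (C x, …, C A^(k-1) x)`; it corresponds to `Ω_{k-1}`. -/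
def observabilityMap (k : ℕ) : X →ₗ[K] (Fin k → Y) :=
  LinearMap.pi fun i => S.C ∘ₗ (S.A ^ (i : ℕ))

/-- The states whose free response vanishes at the times `0, …, k - 1`. -/
def unobservable (k : ℕ) : Submodule K X :=
  LinearMap.ker (S.observabilityMap k)

/-- The lag: the first time at which one more output does not shrink the unobservable subspace. -/
noncomputable def lag : ℕ :=
  sInf {k | S.unobservable (k + 1) = S.unobservable k}

/-- Observability: the free response determines the state. -/
def IsObservable : Prop :=
  Function.Injective S.freeResponse

variable {S}

lemma mem_unobservable {k : ℕ} {x : X} :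
    x ∈ S.unobservable k ↔ ∀ i < k, S.freeResponse x i = 0 := by
  simp only [unobservable, LinearMap.mem_ker, funext_iff, Fin.forall_iff]
  rfl

variable (S)

lemma unobservable_antitone : Antitone S.unobservable := fun _ _ hjk _ hx =>
  mem_unobservable.2 fun i hi => mem_unobservable.1 hx i (hi.trans_le hjk)

lemma unobservable_succ (k : ℕ) :
    S.unobservable (k + 1) = LinearMap.ker S.C ⊓ (S.unobservable k).comap S.A := by
  ext x
  simp only [Submodule.mem_inf, Submodule.mem_comap, mem_unobservable, freeResponse_A,
    LinearMap.mem_ker]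
  exact ⟨fun h => ⟨h 0 k.succ_pos, fun i hi => h (i + 1) (by lia)⟩,
    fun h i hi => match i with
      | 0 => h.1
      | i + 1 => h.2 i (by lia)⟩

variable {S}

lemma unobservable_eq_of_le {j k : ℕ} (h : S.unobservable (j + 1) = S.unobservable j)
    (hjk : j ≤ k) : S.unobservable k = S.unobservable j := by
  have hstep : ∀ i, S.unobservable (j + i + 1) = S.unobservable (j + i) := by
    intro i
    induction i with
    | zero => exact h
    | succ i ih => rw [unobservable_succ, ← add_assoc, ih, ← unobservable_succ, ih]
  induction k, hjk using Nat.le_induction with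
  | base => rfl
  | succ k hjk ih => rw [← ih, ← Nat.add_sub_of_le hjk, hstep]

lemma mem_iff_freeResponse_eq_zero {k : ℕ} (h : S.unobservable (k + 1) = S.unobservable k) {x : X} :
    x ∈ S.unobservable k ↔ S.freeResponse x = 0 := by
  refine ⟨fun hx => funext fun i => ?_, fun hx => mem_unobservable.2 fun i _ => congrFun hx i⟩
  have hmem : x ∈ S.unobservable (k + (i + 1)) := by
    rwa [unobservable_eq_of_le h (Nat.le_add_right _ _)]
  exact mem_unobservable.1 hmem i (by lia)

variable (S)

lemma exists_unobservable_succ_eq [FiniteDimensional K X] (k : ℕ) :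
    ∃ j, j ≤ k + Module.finrank K (S.unobservable k) ∧
      S.unobservable (j + 1) = S.unobservable j := by
  induction hd : Module.finrank K (S.unobservable k) using Nat.strong_induction_on
    generalizing k with
  | _ d ih =>
    subst hd
    by_cases heq : S.unobservable (k + 1) = S.unobservable k
    · exact ⟨k, Nat.le_add_right _ _, heq⟩
    · have hlt := Submodule.finrank_lt_finrank_of_lt
        (lt_of_le_of_ne (S.unobservable_antitone k.le_succ) heq)
      obtain ⟨j, hj, hj'⟩ := ih _ hlt (k + 1) rfl
      exact ⟨j, by lia, hj'⟩

variable {S}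

lemma lag_le_of_unobservable_succ_eq {k : ℕ} (h : S.unobservable (k + 1) = S.unobservable k) :
    S.lag ≤ k :=
  Nat.sInf_le h

lemma lag_le_of_unobservable_eq_bot {k : ℕ} (h : S.unobservable k = ⊥) : S.lag ≤ k :=
  lag_le_of_unobservable_succ_eq <| by
    rw [h, ← le_bot_iff, ← h]
    exact S.unobservable_antitone k.le_succ

lemma IsObservable.of_unobservable_eq_bot {k : ℕ} (h : S.unobservable k = ⊥) : S.IsObservable :=
  (injective_iff_map_eq_zero _).2 fun _ hx => (Submodule.mem_bot K).1 <|
    h ▸ mem_unobservable.2 fun i _ => congrFun hx i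

section FiniteDimensional

variable (S) [FiniteDimensional K X]

lemma lag_le_add_finrank (k : ℕ) : S.lag ≤ k + Module.finrank K (S.unobservable k) :=
  let ⟨_, hj, hj'⟩ := S.exists_unobservable_succ_eq k
  (lag_le_of_unobservable_succ_eq hj').trans hj

lemma lag_le_finrank : S.lag ≤ Module.finrank K X := by
  obtain ⟨j, hj, hj'⟩ := S.exists_unobservable_succ_eq 0
  exact (lag_le_of_unobservable_succ_eq hj').trans
    (hj.trans ((zero_add _).trans_le (Submodule.finrank_le _)))

lemma unobservable_lag_succ : S.unobservable (S.lag + 1) = S.unobservable S.lag :=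
  Nat.sInf_mem (s := {k | S.unobservable (k + 1) = S.unobservable k})
    (let ⟨j, _, hj⟩ := S.exists_unobservable_succ_eq 0; ⟨j, hj⟩)

variable {S}

lemma freeResponse_eq_zero_of_lag {x : X} (hx : ∀ i < S.lag, S.freeResponse x i = 0) :
    S.freeResponse x = 0 :=
  (mem_iff_freeResponse_eq_zero S.unobservable_lag_succ).1 (mem_unobservable.2 hx)

lemma IsObservable.unobservable_eq_bot (h : S.IsObservable) {k : ℕ} (hk : S.lag ≤ k) :
    S.unobservable k = ⊥ :=
  (Submodule.eq_bot_iff _).2 fun _ hx => (injective_iff_map_eq_zero _).1 h _ <|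
    freeResponse_eq_zero_of_lag fun i hi => mem_unobservable.1 hx i (hi.trans_le hk)

lemma isObservable_iff {k : ℕ} (hk : Module.finrank K X ≤ k) :
    S.IsObservable ↔ S.unobservable k = ⊥ :=
  ⟨fun h => h.unobservable_eq_bot (S.lag_le_finrank.trans hk), .of_unobservable_eq_bot⟩

end FiniteDimensional

section Controllability

variable (S)

/-- Controllability: the vectors `A^i B w` span the state space. -/
def IsControllable : Prop :=
  Submodule.span K (Set.range fun iw : ℕ × U => (S.A ^ iw.1) (S.B iw.2)) = ⊤

/-- The dual system, obtained by transposing all coefficients and exchanging inputs and outputs. -/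
def dual : StateSpace K (Module.Dual K Y) (Module.Dual K X) (Module.Dual K U) where
  A := S.A.dualMap
  B := S.C.dualMap
  C := S.B.dualMap
  D := S.D.dualMap

lemma dual_freeResponse_apply (ψ : Module.Dual K X) (i : ℕ) (w : U) :
    S.dual.freeResponse ψ i w = ψ ((S.A ^ i) (S.B w)) := by
  induction i generalizing ψ with
  | zero => rfl
  | succ i ih =>
    rw [← freeResponse_A, ih, pow_succ', Module.End.mul_apply]
    rfl

variable {S}

lemma isControllable_iff :
    S.IsControllable ↔ ∀ ψ : Module.Dual K X, (∀ i w, ψ ((S.A ^ i) (S.B w)) = 0) → ψ = 0 := by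
  refine ⟨fun h ψ hψ => LinearMap.ext_on_range h fun iw => hψ iw.1 iw.2, fun h => ?_⟩
  by_contra hne
  obtain ⟨ψ, hψ, hker⟩ := Submodule.exists_le_ker_of_lt_top _ (lt_top_iff_ne_top.2 hne)
  exact hψ (h ψ fun i w => hker (Submodule.subset_span ⟨(i, w), rfl⟩))

lemma isControllable_iff_dual_isObservable : S.IsControllable ↔ S.dual.IsObservable := by
  rw [isControllable_iff, IsObservable, injective_iff_map_eq_zero]
  simp only [funext_iff, LinearMap.ext_iff, dual_freeResponse_apply, Pi.zero_apply,
    LinearMap.zero_apply]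

end Controllability

section Isomorphism

variable {X' : Type*} [AddCommGroup X'] [Module K X']

variable (S) in
/-- The system in the new state coordinates given by `e`. -/
def map (e : X ≃ₗ[K] X') : StateSpace K U X' Y where
  A := e.conj S.A
  B := e.toLinearMap ∘ₗ S.B
  C := S.C ∘ₗ e.symm.toLinearMap
  D := S.D

variable {e : X ≃ₗ[K] X'}

lemma map_A_pow_apply (i : ℕ) (x : X) : ((S.map e).A ^ i) (e x) = e ((S.A ^ i) x) := by
  induction i generalizing x with
  | zero => rfl
  | succ i ih =>
    rw [pow_succ, pow_succ, Module.End.mul_apply, Module.End.mul_apply, ← ih]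
    simp [map, LinearEquiv.conj_apply]

lemma map_freeResponse (x : X) : (S.map e).freeResponse (e x) = S.freeResponse x := by
  funext i
  rw [freeResponse_apply, freeResponse_apply, map_A_pow_apply]
  simp [map]

lemma map_markov : (S.map e).markov = S.markov := by
  funext i
  cases i with
  | zero => rfl
  | succ i => exact LinearMap.ext fun w => congrFun (map_freeResponse (S.B w)) i

lemma map_output (s : ℕ) (x : X) (u : ℕ → U) :
    (S.map e).output s (e x, u) = S.output s (x, u) := by
  rw [output_eq, output_eq, map_freeResponse, map_markov]

lemma Generates.map {x : X} {t : ℕ} {u : ℕ → U} {y : ℕ → Y} (h : S.Generates x t u y) :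
    (S.map e).Generates (e x) t u y := fun s hs => (map_output s x u).trans (h s hs)

lemma IsControllable.map (h : S.IsControllable) : (S.map e).IsControllable := by
  refine isControllable_iff.2 fun ψ hψ => LinearMap.ext fun x => ?_
  have hzero : ψ ∘ₗ e.toLinearMap = 0 := isControllable_iff.1 h _ fun i w => by
    rw [LinearMap.comp_apply, LinearEquiv.coe_coe, ← map_A_pow_apply]
    exact hψ i w
  simpa using LinearMap.congr_fun hzero (e.symm x)

lemma map_unobservable_eq_bot_iff {k : ℕ} :
    (S.map e).unobservable k = ⊥ ↔ S.unobservable k = ⊥ := by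
  simp only [Submodule.eq_bot_iff, mem_unobservable]
  rw [e.surjective.forall]
  simp [map_freeResponse]

variable {S₁ : StateSpace K U X Y} {S₂ : StateSpace K U X' Y}

lemma range_freeResponse_le (h₁ : S₁.IsControllable) (h : S₁.markov = S₂.markov) :
    LinearMap.range S₁.freeResponse ≤ LinearMap.range S₂.freeResponse := by
  rw [LinearMap.range_eq_map, ← h₁, Submodule.map_span_le]
  rintro _ ⟨⟨j, w⟩, rfl⟩
  refine ⟨(S₂.A ^ j) (S₂.B w), funext fun i => ?_⟩
  rw [freeResponse_A_pow, freeResponse_A_pow, ← markov_succ_apply, ← markov_succ_apply, h]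

/-- The state-space isomorphism theorem: both state spaces are identified with the space of free
responses, which is spanned by the shifted impulse responses. -/
lemma exists_map_eq_of_markov_eq (hc₁ : S₁.IsControllable) (ho₁ : S₁.IsObservable)
    (hc₂ : S₂.IsControllable) (ho₂ : S₂.IsObservable) (h : S₁.markov = S₂.markov) :
    ∃ e : X ≃ₗ[K] X', S₂ = S₁.map e := by
  have hrange : LinearMap.range S₁.freeResponse = LinearMap.range S₂.freeResponse :=
    (range_freeResponse_le hc₁ h).antisymm (range_freeResponse_le hc₂ h.symm)
  let e : X ≃ₗ[K] X' := LinearEquiv.ofInjective _ ho₁ ≪≫ₗ LinearEquiv.ofEq _ _ hrange ≪≫ₗ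
    (LinearEquiv.ofInjective _ ho₂).symm
  have he (x : X) : S₂.freeResponse (e x) = S₁.freeResponse x :=
    congrArg Subtype.val ((LinearEquiv.ofInjective _ ho₂).apply_symm_apply
      ⟨S₁.freeResponse x, hrange ▸ LinearMap.mem_range_self _ x⟩)
  have hA (x : X) : S₂.A (e x) = e (S₁.A x) := ho₂ <| funext fun i => by
    rw [freeResponse_A, he, he, freeResponse_A]
  have hB (w : U) : S₂.B w = e (S₁.B w) := ho₂ <| funext fun i => by
    rw [he, ← markov_succ_apply, ← markov_succ_apply, h]
  have hC (x : X) : S₂.C (e x) = S₁.C x := congrFun (he x) 0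
  refine ⟨e, StateSpace.ext (LinearMap.ext fun x => ?_) (LinearMap.ext hB)
    (LinearMap.ext fun x => ?_) (congrFun h 0).symm⟩
  · simp [map, LinearEquiv.conj_apply, ← hA]
  · simp [map, ← hC]

lemma finrank_le_of_markov_eq [FiniteDimensional K X'] (hc₁ : S₁.IsControllable)
    (ho₁ : S₁.IsObservable) (h : S₁.markov = S₂.markov) :
    Module.finrank K X ≤ Module.finrank K X' :=
  calc Module.finrank K X
      = Module.finrank K (LinearMap.range S₁.freeResponse) :=
        (LinearMap.finrank_range_of_inj ho₁).symm
    _ ≤ Module.finrank K (LinearMap.range S₂.freeResponse) :=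
        Submodule.finrank_mono (range_freeResponse_le hc₁ h)
    _ ≤ Module.finrank K X' := LinearMap.finrank_range_le _

end Isomorphism

end StateSpace

/-! ### Matrix systems as state-space systems -/

lemma rank_eq_iff_ker_eq_bot {K ι : Type*} [Field K] {n : ℕ} (M : Matrix ι (Fin n) K) :
    M.rank = n ↔ LinearMap.ker M.mulVecLin = ⊥ := by
  have h := M.mulVecLin.finrank_range_add_finrank_ker
  rw [Module.finrank_fin_fun] at h
  rw [← Submodule.finrank_eq_zero, Matrix.rank]
  lia

namespace LinSys

variable {m p : ℕ}

section Matrices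

variable (sys : LinSys m p)

/-- The system with the coefficient matrices replaced by the linear maps they represent. -/
def toStateSpace : StateSpace ℝ (Fin m → ℝ) (Fin sys.n → ℝ) (Fin p → ℝ) where
  A := toLin' sys.A
  B := toLin' sys.B
  C := toLin' sys.C
  D := toLin' sys.D

lemma ker_obsMat (k : ℕ) :
    LinearMap.ker (obsMat sys k).mulVecLin = sys.toStateSpace.unobservable k := by
  ext x
  have hrow (i : Fin k) (a : Fin p) :
      (obsMat sys k *ᵥ x) (i, a) = sys.toStateSpace.freeResponse x i a := by
    simp only [StateSpace.freeResponse_apply, toStateSpace, ← toLin'_pow, toLin'_apply,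
      mulVec_mulVec]
    rfl
  simp only [LinearMap.mem_ker, mulVecLin_apply, StateSpace.mem_unobservable, funext_iff,
    Prod.forall, hrow, Fin.forall_iff (n := k), Pi.zero_apply]

lemma ker_ctrlMat_transpose (k : ℕ) :
    LinearMap.ker (ctrlMat sys k)ᵀ.mulVecLin =
      (sys.toStateSpace.dual.unobservable k).comap (dotProductEquiv ℝ (Fin sys.n)).toLinearMap := by
  ext v
  have hcol (i : ℕ) :
      sys.toStateSpace.dual.freeResponse (dotProductEquiv ℝ (Fin sys.n) v) i = 0 ↔
        v ᵥ* (sys.A ^ i * sys.B) = 0 := by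
    rw [LinearMap.ext_iff, ← dotProduct_eq_zero_iff, ← vecMul_vecMul]
    simp only [StateSpace.dual_freeResponse_apply, toStateSpace, ← toLin'_pow,
      toLin'_apply, dotProductEquiv_apply_apply, dotProduct_mulVec, LinearMap.zero_apply]
  simp only [LinearMap.mem_ker, mulVecLin_apply, Submodule.mem_comap, LinearEquiv.coe_coe,
    StateSpace.mem_unobservable, hcol, funext_iff, Prod.forall, Fin.forall_iff (n := k)]
  simp only [mulVec_transpose]
  rfl

lemma rank_obsMat_add_finrank (k : ℕ) :
    (obsMat sys k).rank + Module.finrank ℝ (sys.toStateSpace.unobservable k) = sys.n := by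
  rw [← ker_obsMat, Matrix.rank, LinearMap.finrank_range_add_finrank_ker, Module.finrank_fin_fun]

lemma lag_toStateSpace : sys.toStateSpace.lag = lag sys := by
  refine congrArg sInf (Set.ext fun k => ⟨fun h => ?_, fun h => ?_⟩)
  · have h₁ := sys.rank_obsMat_add_finrank (k + 1)
    rw [h] at h₁
    have h₀ := sys.rank_obsMat_add_finrank k
    exact (by lia : (obsMat sys (k + 1)).rank = (obsMat sys k).rank)
  · have hle := sys.toStateSpace.unobservable_antitone k.le_succ
    refine Submodule.eq_of_le_of_finrank_eq hle ?_
    have h₀ := sys.rank_obsMat_add_finrank k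
    have h₁ := sys.rank_obsMat_add_finrank (k + 1)
    rw [h.out] at h₁
    lia

variable {sys}

lemma observable_iff : Observable sys ↔ sys.toStateSpace.IsObservable := by
  rw [StateSpace.isObservable_iff (k := sys.n) (by simp), ← ker_obsMat, ← rank_eq_iff_ker_eq_bot]
  rfl

lemma controllable_iff : Controllable sys ↔ sys.toStateSpace.IsControllable := by
  rw [StateSpace.isControllable_iff_dual_isObservable,
    StateSpace.isObservable_iff (k := sys.n) (by simp), Controllable, ← rank_transpose,
    rank_eq_iff_ker_eq_bot, ker_ctrlMat_transpose, Submodule.comap_equiv_eq_map_symm,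
    Submodule.map_eq_bot_iff]

lemma minimalSys_iff :
    MinimalSys sys ↔ sys.toStateSpace.IsControllable ∧ sys.toStateSpace.IsObservable :=
  and_congr controllable_iff observable_iff

lemma explains_iff {t : ℕ} {u : ℕ → Fin m → ℝ} {y : ℕ → Fin p → ℝ} :
    Explains sys t u y ↔ ∃ x, sys.toStateSpace.Generates x t u y := by
  constructor
  · rintro ⟨x, hx⟩
    have hstate : ∀ s ≤ t, sys.toStateSpace.state s (x 0, u) = x s := by
      intro s hs
      induction s with
      | zero => rfl
      | succ s ih => rw [StateSpace.state_succ, ih (by lia), (hx s hs).1]; rfl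
    refine ⟨x 0, fun s hs => ?_⟩
    rw [StateSpace.output_apply, hstate s hs.le, (hx s hs).2]
    rfl
  · rintro ⟨x, hx⟩
    exact ⟨fun s => sys.toStateSpace.state s (x, u), fun s hs => ⟨rfl, (hx s hs).symm⟩⟩

lemma isomorphic_iff {sys' : LinSys m p} :
    Isomorphic sys sys' ↔ ∃ e, sys'.toStateSpace = sys.toStateSpace.map e := by
  constructor
  · rintro ⟨hD, S, S', hSS', hS'S, hA, hB, hC⟩
    refine ⟨toLin'OfInv hS'S hSS', StateSpace.ext ?_ ?_ ?_ (congrArg toLin' hD.symm)⟩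
    all_goals refine LinearMap.ext fun x => ?_
    · change sys'.A *ᵥ x = S *ᵥ sys.A *ᵥ S' *ᵥ x
      rw [mulVec_mulVec, mulVec_mulVec, hA, Matrix.mul_assoc, hSS', Matrix.mul_one]
    · change sys'.B *ᵥ x = S *ᵥ sys.B *ᵥ x
      rw [mulVec_mulVec, hB]
    · change sys'.C *ᵥ x = sys.C *ᵥ S' *ᵥ x
      rw [mulVec_mulVec, hC, Matrix.mul_assoc, hSS', Matrix.mul_one]
  · rintro ⟨e, he⟩
    have hA := congrArg StateSpace.A he
    have hB := congrArg StateSpace.B he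
    have hC := congrArg StateSpace.C he
    have hD := congrArg StateSpace.D he
    refine ⟨(toLin'.injective hD).symm, e.toLinearMap.toMatrix', e.symm.toLinearMap.toMatrix',
      ?_, ?_, toLin'.injective ?_, toLin'.injective ?_, toLin'.injective ?_⟩
    · rw [← LinearMap.toMatrix'_comp, LinearEquiv.comp_symm, LinearMap.toMatrix'_id]
    · rw [← LinearMap.toMatrix'_comp, LinearEquiv.symm_comp, LinearMap.toMatrix'_id]
    all_goals
      refine LinearMap.ext fun x => ?_
      simp only [toLin'_mul, toLin'_toMatrix', LinearMap.comp_apply]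
    · simpa [toStateSpace, StateSpace.map, LinearEquiv.conj_apply] using
        (LinearMap.congr_fun hA (e x)).symm
    · exact (LinearMap.congr_fun hB x).symm
    · simpa [toStateSpace, StateSpace.map] using (LinearMap.congr_fun hC (e x)).symm

end Matrices

variable {X : Type*} [AddCommGroup X] [Module ℝ X] [FiniteDimensional ℝ X]

/-- The matrix representation of a system with respect to a basis of its state space. -/
noncomputable def realize (S : StateSpace ℝ (Fin m → ℝ) X (Fin p → ℝ)) : LinSys m p :=
  let T := S.map (Module.finBasis ℝ X).equivFun
  { n := Module.finrank ℝ X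
    A := T.A.toMatrix'
    B := T.B.toMatrix'
    C := T.C.toMatrix'
    D := T.D.toMatrix' }

lemma toStateSpace_realize (S : StateSpace ℝ (Fin m → ℝ) X (Fin p → ℝ)) :
    (realize S).toStateSpace = S.map (Module.finBasis ℝ X).equivFun :=
  StateSpace.ext (toLin'_toMatrix' _) (toLin'_toMatrix' _) (toLin'_toMatrix' _) (toLin'_toMatrix' _)

end LinSys

/-! ### Windows and Hankel matrices -/

/-- The window `f s, …, f (s + k)` of a sequence. -/
def window {M : Type*} (f : ℕ → M) (k s : ℕ) : Fin (k + 1) → M := fun i => f (s + i)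

namespace StateSpace

variable {K U X Y : Type*} [Field K] [AddCommGroup U] [Module K U]
  [AddCommGroup X] [Module K X] [AddCommGroup Y] [Module K Y] (S : StateSpace K U X Y)
  {x : X} {t k : ℕ} {u : ℕ → U} {y : ℕ → Y}

/-- The output and input windows of length `k + 1` as a function of the state and the input window.
The outputs do not depend on how `Fin.ofNat` extends the input beyond the window. -/
def windowMap (k : ℕ) : X × (Fin (k + 1) → U) →ₗ[K] (Fin (k + 1) → Y) × (Fin (k + 1) → U) :=
  (LinearMap.pi fun i : Fin (k + 1) => S.output i ∘ₗ
    LinearMap.id.prodMap (LinearMap.funLeft K U (Fin.ofNat (k + 1)))).prod (LinearMap.snd K _ _)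

/-- The span of the state/input windows along the part of a trajectory before time `t`. -/
def stateInputSpan (x : X) (u : ℕ → U) (k t : ℕ) : Submodule K (X × (Fin (k + 1) → U)) :=
  Submodule.span K ((fun s => (S.state s (x, u), window u k s)) '' {s | s + k < t})

lemma windowMap_window (x : X) (u : ℕ → U) (k s : ℕ) :
    S.windowMap k (x, window u k s) =
      (fun i : Fin (k + 1) => S.output i (x, fun j => u (s + j)), window u k s) := by
  refine Prod.ext (funext fun i => S.output_congr x fun j hj => ?_) rfl
  simp [LinearMap.funLeft_apply, window, Nat.mod_eq_of_lt (hj.trans_lt i.2)]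

lemma windowMap_zero_right (x : X) (k : ℕ) :
    S.windowMap k (x, 0) = (S.observabilityMap (k + 1) x, 0) :=
  (S.windowMap_window x 0 k 0).trans <| Prod.ext (funext fun i => S.output_zero_right i x) rfl

lemma windowMap_injective_iff :
    Function.Injective (S.windowMap k) ↔ S.unobservable (k + 1) = ⊥ := by
  rw [injective_iff_map_eq_zero, unobservable, Submodule.eq_bot_iff]
  refine ⟨fun h x hx => congrArg Prod.fst (h (x, 0) ?_), fun h z hz => ?_⟩
  · rw [windowMap_zero_right, LinearMap.mem_ker.1 hx, Prod.mk_zero_zero]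
  · obtain ⟨x, w⟩ := z
    obtain rfl : w = 0 := congrArg Prod.snd hz
    rw [windowMap_zero_right] at hz
    rw [h x (congrArg Prod.fst hz), Prod.mk_zero_zero]

lemma stateInputSpan_eq_top_of_le {j : ℕ} (hjk : j ≤ k) (h : S.stateInputSpan x u k t = ⊤) :
    S.stateInputSpan x u j t = ⊤ := by
  have hcast : Function.Injective (Fin.castLE (Nat.succ_le_succ hjk)) := Fin.castLE_injective _
  let restrict : X × (Fin (k + 1) → U) →ₗ[K] X × (Fin (j + 1) → U) :=
    LinearMap.id.prodMap (LinearMap.funLeft K U (Fin.castLE (Nat.succ_le_succ hjk)))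
  have hrestrict : LinearMap.range restrict = ⊤ := LinearMap.range_eq_top.2 <|
    Function.surjective_id.prodMap (LinearMap.funLeft_surjective_of_injective K U _ hcast)
  rw [eq_top_iff, ← hrestrict, LinearMap.range_eq_map, ← h, stateInputSpan, Submodule.map_span_le]
  rintro _ ⟨s, hs, rfl⟩
  exact Submodule.subset_span ⟨s, by grind, rfl⟩

variable {S}

lemma Generates.windowMap_state (h : S.Generates x t u y) {s : ℕ} (hs : s + k < t) :
    S.windowMap k (S.state s (x, u), window u k s) = (window y k s, window u k s) := by
  rw [windowMap_window]
  refine Prod.ext (funext fun i => ?_) rfl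
  exact (S.output_shift s i x u).symm.trans (h _ (by lia))

lemma Generates.map_stateInputSpan (h : S.Generates x t u y) :
    (S.stateInputSpan x u k t).map (S.windowMap k) =
      Submodule.span K ((fun s => (window y k s, window u k s)) '' {s | s + k < t}) := by
  rw [stateInputSpan, Submodule.map_span, Set.image_image]
  exact congrArg _ (Set.image_congr fun s hs => h.windowMap_state hs)

end StateSpace

lemma finrank_map_eq_iff {K E F : Type*} [Field K] [AddCommGroup E] [Module K E]
    [AddCommGroup F] [Module K F] [FiniteDimensional K E] (f : E →ₗ[K] F) (P : Submodule K E) :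
    Module.finrank K (P.map f) = Module.finrank K E ↔ P = ⊤ ∧ Function.Injective f := by
  refine ⟨fun h => ?_, fun ⟨hP, hf⟩ => ?_⟩
  · have hP : P = ⊤ := Submodule.eq_top_of_finrank_eq
      (P.finrank_le.antisymm (h ▸ Submodule.finrank_map_le f P))
    refine ⟨hP, LinearMap.ker_eq_bot.1 (Submodule.finrank_eq_zero.1 ?_)⟩
    have hrank := f.finrank_range_add_finrank_ker
    rw [LinearMap.range_eq_map, ← hP] at hrank
    lia
  · rw [hP, ← LinearMap.range_eq_map, LinearMap.finrank_range_of_inj hf]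

section Hankel

variable {m p : ℕ} {X : Type*} [AddCommGroup X] [Module ℝ X] [FiniteDimensional ℝ X]
  {S : StateSpace ℝ (Fin m → ℝ) X (Fin p → ℝ)} {x : X} {t k : ℕ}
  {u : ℕ → Fin m → ℝ} {y : ℕ → Fin p → ℝ}

lemma rank_Hkt (u : ℕ → Fin m → ℝ) (y : ℕ → Fin p → ℝ) (k t : ℕ) :
    (Hkt u y k t).rank = Module.finrank ℝ (Submodule.span ℝ
      ((fun s => (window y k s, window u k s)) '' {s | s + k < t})) := by
  let e : ((Fin (k + 1) → Fin p → ℝ) × (Fin (k + 1) → Fin m → ℝ)) ≃ₗ[ℝ]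
      ((Fin (k + 1) × Fin p) ⊕ (Fin (k + 1) × Fin m) → ℝ) :=
    ((LinearEquiv.curry ℝ ℝ _ _).symm.prodCongr (LinearEquiv.curry ℝ ℝ _ _).symm).trans
      (LinearEquiv.sumArrowLequivProdArrow _ _ ℝ ℝ).symm
  have hcol (c : Fin (t - k)) : (Hkt u y k t).col c = e (window y k c, window u k c) := by
    funext i
    rcases i with ⟨r, a⟩ | ⟨r, a⟩
    · exact congrFun (congrArg y (add_comm _ _)) a
    · exact congrFun (congrArg u (add_comm _ _)) a
  have hrange : Set.range (Hkt u y k t).col =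
      e '' ((fun s => (window y k s, window u k s)) '' {s | s + k < t}) := by
    rw [Set.image_image]
    refine Set.Subset.antisymm ?_ ?_
    · rintro _ ⟨c, rfl⟩
      exact ⟨c, Nat.add_lt_of_lt_sub c.2, (hcol c).symm⟩
    · rintro _ ⟨s, hs, rfl⟩
      exact ⟨⟨s, Nat.lt_sub_of_add_lt hs⟩, hcol _⟩
  rw [Matrix.rank_eq_finrank_span_cols, hrange, ← LinearEquiv.coe_coe, ← Submodule.map_span,
    LinearEquiv.finrank_map_eq]

lemma rank_Hkt_le (h : S.Generates x t u y) :
    (Hkt u y k t).rank ≤ (k + 1) * m + Module.finrank ℝ X := by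
  rw [rank_Hkt, ← h.map_stateInputSpan]
  refine (Submodule.finrank_map_le _ _).trans ((Submodule.finrank_le _).trans_eq ?_)
  simp [Module.finrank_prod, Module.finrank_pi_fintype, add_comm]

lemma rank_Hkt_eq_iff (h : S.Generates x t u y) :
    (Hkt u y k t).rank = (k + 1) * m + Module.finrank ℝ X ↔
      S.stateInputSpan x u k t = ⊤ ∧ S.unobservable (k + 1) = ⊥ := by
  rw [rank_Hkt, ← h.map_stateInputSpan, ← S.windowMap_injective_iff, ← finrank_map_eq_iff]
  simp [Module.finrank_prod, Module.finrank_pi_fintype, add_comm]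

end Hankel

/-! ### Sufficiency -/

namespace StateSpace

variable {K U X X' Y : Type*} [Field K] [AddCommGroup U] [Module K U]
  [AddCommGroup X] [Module K X] [AddCommGroup X'] [Module K X'] [AddCommGroup Y] [Module K Y]
  {S : StateSpace K U X Y} {S' : StateSpace K U X' Y}
  {x : X} {x' : X'} {t k : ℕ} {u : ℕ → U} {y : ℕ → Y}

lemma exists_output_eq_of_le (h : S.Generates x t u y) (h' : S'.Generates x' t u y)
    (hspan : S.stateInputSpan x u k t = ⊤) (z : X) (w : ℕ → U) :
    ∃ z', ∀ r ≤ k, S'.output r (z', w) = S.output r (z, w) := by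
  have hrange : LinearMap.range (S.windowMap k) ≤ LinearMap.range (S'.windowMap k) := by
    rw [LinearMap.range_eq_map, ← hspan, h.map_stateInputSpan, ← h'.map_stateInputSpan]
    exact LinearMap.map_le_range
  obtain ⟨⟨z', v⟩, hz'⟩ := hrange (LinearMap.mem_range_self _ (z, window w k 0))
  obtain rfl : v = window w k 0 := congrArg Prod.snd hz'
  simp only [windowMap_window, zero_add] at hz'
  exact ⟨z', fun r hr => congrFun (congrArg Prod.fst hz') ⟨r, Nat.lt_succ_of_le hr⟩⟩

lemma exists_freeResponse_eq_of_le (h : S.Generates x t u y) (h' : S'.Generates x' t u y)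
    (hspan : S.stateInputSpan x u k t = ⊤) (z : X) :
    ∃ z', ∀ r ≤ k, S'.freeResponse z' r = S.freeResponse z r := by
  simpa only [output_zero_right] using exists_output_eq_of_le h h' hspan z 0

lemma lag_le_lag [FiniteDimensional K X'] (h : S.Generates x t u y) (h' : S'.Generates x' t u y)
    (hspan : S.stateInputSpan x u S'.lag t = ⊤) : S.lag ≤ S'.lag := by
  refine lag_le_of_unobservable_succ_eq
    ((S.unobservable_antitone (Nat.le_succ _)).antisymm fun z hz => mem_unobservable.2 ?_)
  obtain ⟨z', hz'⟩ := exists_freeResponse_eq_of_le h h' hspan z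
  have hzero : S'.freeResponse z' = 0 := freeResponse_eq_zero_of_lag fun i hi => by
    rw [hz' i hi.le, mem_unobservable.1 hz i hi]
  intro i hi
  rw [← hz' i (by lia), hzero, Pi.zero_apply]

/-- The first `l` output samples already distinguish as many states of `S'` as `S` has states; from
there on the unobservable subspace of `S'` loses a dimension in each step up to the lag. -/
lemma lag_add_finrank_le [FiniteDimensional K X] [FiniteDimensional K X'] {l : ℕ}
    (h : S.Generates x t u y) (h' : S'.Generates x' t u y)
    (hspan : S.stateInputSpan x u l t = ⊤) (hl : S.unobservable l = ⊥) :
    S'.lag + Module.finrank K X ≤ l + Module.finrank K X' := by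
  have hrange :
      LinearMap.range (S.observabilityMap l) ≤ LinearMap.range (S'.observabilityMap l) := by
    rintro _ ⟨z, rfl⟩
    obtain ⟨z', hz'⟩ := exists_freeResponse_eq_of_le h h' hspan z
    exact ⟨z', funext fun i => hz' i i.2.le⟩
  have hinj : Function.Injective (S.observabilityMap l) := LinearMap.ker_eq_bot.1 hl
  have hker : Module.finrank K (LinearMap.range (S'.observabilityMap l)) +
      Module.finrank K (S'.unobservable l) = Module.finrank K X' :=
    (S'.observabilityMap l).finrank_range_add_finrank_ker
  have hlag := S'.lag_le_add_finrank l
  have hfinrank := (LinearMap.finrank_range_of_inj hinj).ge.trans (Submodule.finrank_mono hrange)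
  lia

/-- On each window of length `k + 1` the given trajectory of `S` matches a trajectory of `S'`.
Consecutive windows overlap in `k` samples, so by observability of `S'` at depth `k` the matching
states form a single trajectory. -/
lemma exists_output_eq (h : S.Generates x t u y) (h' : S'.Generates x' t u y)
    (hspan : S.stateInputSpan x u k t = ⊤) (hk : S'.unobservable k = ⊥) (z : X) (w : ℕ → U) :
    ∃ z', ∀ s, S'.output s (z', w) = S.output s (z, w) := by
  choose Z hZ using fun s =>
    exists_output_eq_of_le h h' hspan (S.state s (z, w)) (fun i => w (s + i))
  simp only [← output_shift] at hZ
  have hstep (s : ℕ) : Z (s + 1) = S'.A (Z s) + S'.B (w s) := by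
    rw [← sub_eq_zero, ← Submodule.mem_bot K, ← hk, mem_unobservable]
    intro r hr
    have hshift := S'.output_shift 1 r (Z s) (fun i => w (s + i))
    rw [hZ s (1 + r) (by lia), ← add_assoc, ← hZ (s + 1) r hr.le] at hshift
    simp only [output_eq, ← add_assoc, add_left_inj, state_succ, state_zero, add_zero] at hshift
    rw [map_sub, Pi.sub_apply, hshift, sub_self]
  have hstate (s : ℕ) : Z s = S'.state s (Z 0, w) := by
    induction s with
    | zero => rfl
    | succ s ih => rw [hstep, ih, state_succ]
  refine ⟨Z 0, fun s => ?_⟩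
  have hs := hZ s 0 k.zero_le
  rwa [hstate, add_zero, ← output_shift, add_zero] at hs

/-- The impulse at time `k` from the zero state of `S` is matched by a trajectory of `S'`, whose
initial state vanishes because its first `k` outputs do. -/
lemma markov_eq_of_generates (h : S.Generates x t u y) (h' : S'.Generates x' t u y)
    (hspan : S.stateInputSpan x u k t = ⊤) (hk : S'.unobservable k = ⊥) :
    S'.markov = S.markov := by
  refine funext fun i => LinearMap.ext fun w => ?_
  obtain ⟨z', hz'⟩ := exists_output_eq h h' hspan hk 0 (Pi.single k w)
  obtain rfl : z' = 0 := by
    rw [← Submodule.mem_bot K, ← hk, mem_unobservable]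
    intro i hi
    rw [← output_single_of_lt S' hi z' w, hz', output_single_of_lt S hi, map_zero, Pi.zero_apply]
  rw [← output_single_add S' k, ← output_single_add S k, hz']

end StateSpace

section Sufficiency

variable {m p : ℕ} {t L N : ℕ} {u : ℕ → Fin m → ℝ} {y : ℕ → Fin p → ℝ} {sys : LinSys m p}

lemma exists_n_eq_nMin (h : Explains sys t u y) :
    ∃ sys₀ : LinSys m p, Explains sys₀ t u y ∧ sys₀.n = nMin t u y :=
  Nat.sInf_mem (s := {n | ∃ sys : LinSys m p, Explains sys t u y ∧ sys.n = n}) ⟨_, sys, h, rfl⟩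

lemma exists_lag_eq_lMin (h : Explains sys t u y) :
    ∃ sys₀ : LinSys m p, Explains sys₀ t u y ∧ lag sys₀ = lMin t u y :=
  Nat.sInf_mem (s := {ℓ | ∃ sys : LinSys m p, Explains sys t u y ∧ lag sys = ℓ}) ⟨_, sys, h, rfl⟩

lemma nMin_le (h : Explains sys t u y) : nMin t u y ≤ sys.n :=
  Nat.sInf_le ⟨sys, h, rfl⟩

lemma lMin_le (h : Explains sys t u y) : lMin t u y ≤ lag sys :=
  Nat.sInf_le ⟨sys, h, rfl⟩

/-- The bound `L_t^a` on the lag of an explaining system in `S_{L,N}`: each unit of lag beyond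
`ℓ_min` costs at least one state beyond `n_min`. -/
noncomputable def lagBound (t : ℕ) (u : ℕ → Fin m → ℝ) (y : ℕ → Fin p → ℝ) (L N : ℕ) : ℕ :=
  min L (N - nMin t u y + lMin t u y)

/-- The systems in `ℰ_t ∩ M ∩ S_{L,N}`, from which the data must single out the true one. -/
def Candidates (t : ℕ) (u : ℕ → Fin m → ℝ) (y : ℕ → Fin p → ℝ) (L N : ℕ) : Set (LinSys m p) :=
  ExplSet t u y ∩ Mset m p ∩ SLN m p L N

lemma isomorphic_of_markov_eq {sys' : LinSys m p} (h : MinimalSys sys) (h' : MinimalSys sys')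
    (hmarkov : sys.toStateSpace.markov = sys'.toStateSpace.markov) : Isomorphic sys sys' := by
  rw [LinSys.minimalSys_iff] at h h'
  exact LinSys.isomorphic_iff.2
    (StateSpace.exists_map_eq_of_markov_eq h.1 h.2 h'.1 h'.2 hmarkov)

lemma markov_eq_of_rank_Hkt {sys₀ : LinSys m p} (h₀ : Explains sys₀ t u y)
    (hn₀ : sys₀.n = nMin t u y) (hL₀ : lMin t u y ≤ L)
    (hrank : (Hkt u y (lagBound t u y L N) t).rank =
      (lagBound t u y L N + 1) * m + nMin t u y)
    (hsys : sys ∈ Candidates t u y L N) :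
    sys.toStateSpace.markov = sys₀.toStateSpace.markov := by
  obtain ⟨⟨hexpl, hmin⟩, hL, hN⟩ := hsys
  obtain ⟨sysl, hsysl, hlag⟩ := exists_lag_eq_lMin h₀
  have hlk : lMin t u y ≤ lagBound t u y L N := le_min hL₀ (Nat.le_add_left _ _)
  obtain ⟨x₀, hx₀⟩ := LinSys.explains_iff.1 h₀
  obtain ⟨x, hx⟩ := LinSys.explains_iff.1 hexpl
  obtain ⟨xl, hxl⟩ := LinSys.explains_iff.1 hsysl
  have hfinrank : Module.finrank ℝ (Fin sys₀.n → ℝ) = nMin t u y := by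
    rw [Module.finrank_fin_fun, hn₀]
  rw [← hfinrank, rank_Hkt_eq_iff hx₀] at hrank
  obtain ⟨hspan, hbot⟩ := hrank
  have hspanl := sys₀.toStateSpace.stateInputSpan_eq_top_of_le hlk hspan
  have hlag₀ : sys₀.toStateSpace.lag ≤ lMin t u y := by
    rw [← hlag, ← LinSys.lag_toStateSpace] at hspanl ⊢
    exact StateSpace.lag_le_lag hx₀ hxl hspanl
  have hobs₀ := (StateSpace.IsObservable.of_unobservable_eq_bot hbot).unobservable_eq_bot hlag₀
  have hbound := StateSpace.lag_add_finrank_le hx₀ hx hspanl hobs₀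
  rw [hfinrank, Module.finrank_fin_fun] at hbound
  rw [← LinSys.lag_toStateSpace] at hL
  exact StateSpace.markov_eq_of_generates hx₀ hx hspan
    ((LinSys.minimalSys_iff.1 hmin).2.unobservable_eq_bot (le_min hL (by lia)))

lemma informative_of_rank_Hkt {sysT : LinSys m p} (hT : sysT ∈ Candidates t u y L N)
    (hrank : (Hkt u y (lagBound t u y L N) t).rank =
      (lagBound t u y L N + 1) * m + nMin t u y) :
    Informative t u y sysT.n L N := by
  obtain ⟨sys₀, h₀, hn₀⟩ := exists_n_eq_nMin hT.1.1
  have hmarkov {sys} (hsys : sys ∈ Candidates t u y L N) :=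
    markov_eq_of_rank_Hkt h₀ hn₀ ((lMin_le hT.1.1).trans hT.2.1) hrank hsys
  have hn {sys} (hsys : sys ∈ Candidates t u y L N) : sys.n = nMin t u y := by
    have hmin := LinSys.minimalSys_iff.1 hsys.1.2
    refine (nMin_le hsys.1.1).antisymm' ?_
    simpa [hn₀] using StateSpace.finrank_le_of_markov_eq hmin.1 hmin.2 (hmarkov hsys)
  refine ⟨Set.ext fun sys => ⟨fun h => ?_, fun h => ⟨⟨h.1.1.1, h.1.2⟩, h.2⟩⟩, ?_⟩
  · exact ⟨⟨⟨h.1.1, (hn h).trans (hn hT).symm⟩, h.1.2⟩, h.2⟩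
  · intro sys₁ h₁ sys₂ h₂
    exact isomorphic_of_markov_eq h₁.1.2 h₂.1.2 ((hmarkov h₁).trans (hmarkov h₂).symm)

end Sufficiency

/-! ### Feeding an annihilator back through a channel -/

namespace StateSpace

variable {K U V X Y : Type*} [Field K] [AddCommGroup U] [Module K U] [AddCommGroup V] [Module K V]
  [AddCommGroup X] [Module K X] [AddCommGroup Y] [Module K Y] {S : StateSpace K U X Y}

lemma state_shift_zero_add (S : StateSpace K U X Y) (i : ℕ) (f : ℕ → U) :
    S.state i (0, fun l => f (l + 1)) + (S.A ^ i) (S.B (f 0)) =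
      S.A (S.state i (0, f)) + S.B (f i) := by
  have h := S.state_shift 1 i 0 f
  rw [add_comm 1, state_succ, state_eq_add S i (S.state 1 (0, f)), state_succ, state_zero,
    map_zero, zero_add] at h
  simpa only [add_comm] using h.symm

section Delay

variable {j k : ℕ} {f : ℕ → U}

lemma state_eq_zero (hf : ∀ i < j, f i = 0) : S.state j (0, f) = 0 := by
  rw [S.state_congr (v := 0) 0 hf, Prod.mk_zero_zero, map_zero]

lemma output_eq_zero_of_markov (h : ∀ i < k, S.markov i = 0) (hj : j < k) :
    S.output j (0, f) = 0 := by
  rw [output_eq, map_zero, Pi.zero_apply, zero_add]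
  refine Finset.sum_eq_zero fun ij hij => ?_
  rw [h _ ((antidiagonal.fst_le hij).trans_lt hj), LinearMap.zero_apply]

lemma output_eq_markov (h : ∀ i < k, S.markov i = 0) (hf : ∀ i < j, f i = 0) :
    S.output (k + j) (0, f) = S.markov k (f j) := by
  rw [output_eq, map_zero, Pi.zero_apply, zero_add, Finset.sum_eq_single (k, j)]
  · rintro ⟨a, b⟩ hab hne
    obtain ha | hb : a < k ∨ b < j := by
      simp only [mem_antidiagonal, ne_eq, Prod.mk.injEq] at hab hne
      lia
    · rw [h a ha, LinearMap.zero_apply]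
    · rw [hf b hb, map_zero]
  · simp

lemma eq_zero_of_output_eq_zero (h : ∀ i < k, S.markov i = 0)
    (hinj : Function.Injective (S.markov k)) (hf : ∀ i < k + j, S.output i (0, f) = 0) :
    ∀ i < j, f i = 0 := by
  intro i
  induction i using Nat.strong_induction_on with
  | _ i ih =>
    intro hi
    apply hinj
    rw [map_zero, ← output_eq_markov h fun r hr => ih r hr (hr.trans hi), hf _ (by lia)]

end Delay

variable (S)

/-- The system with the same state and output as `S`, driven through `b` and `e` instead. -/
def channel (b : V →ₗ[K] X) (e : V →ₗ[K] Y) : StateSpace K V X Y :=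
  ⟨S.A, b, S.C, e⟩

/-- The closed loop obtained by feeding `ξ x` into the channel given by `b` and `e`. -/
def feedback (b : V →ₗ[K] X) (e : V →ₗ[K] Y) (ξ : X →ₗ[K] V) : StateSpace K U X Y :=
  ⟨S.A + b ∘ₗ ξ, S.B, S.C + e ∘ₗ ξ, S.D⟩

/-- The system that arises when `η 0 (u s) + ⋯ + η k (u (s + k))` is fed into the channel given by
`b` and `e`, with the dependence on future inputs removed by a change of state. -/
def feedforward (b : V →ₗ[K] X) (e : V →ₗ[K] Y) (η : ℕ → U →ₗ[K] V) (k : ℕ) :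
    StateSpace K U X Y :=
  ⟨S.A, S.B + ∑ i ∈ Finset.range (k + 1), (S.A ^ i) ∘ₗ b ∘ₗ η i, S.C,
    S.D + (S.channel b e).markov k ∘ₗ η k⟩

variable {b : V →ₗ[K] X} {e : V →ₗ[K] Y} {ξ : X →ₗ[K] V} {η : ℕ → U →ₗ[K] V} {k : ℕ}

lemma exists_output_feedback (x : X) (u : ℕ → U) (g : ℕ → V) : ∃ f : ℕ → V,
    (∀ s, f s = ξ (S.state s (x, u) + (S.channel b e).state s (0, f)) + g s) ∧
    ∀ s, (S.feedback b e ξ).output s (x, u) + ((S.feedback b e ξ).channel b e).output s (0, g) =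
      S.output s (x, u) + (S.channel b e).output s (0, f) := by
  let closed (s : ℕ) : X :=
    (S.feedback b e ξ).state s (x, u) + ((S.feedback b e ξ).channel b e).state s (0, g)
  let f (s : ℕ) : V := ξ (closed s) + g s
  have hstate (s : ℕ) : S.state s (x, u) + (S.channel b e).state s (0, f) = closed s := by
    induction s with
    | zero => rfl
    | succ s ih =>
      have hstep := congrArg S.A ih
      simp only [closed, state_succ, f] at hstep ⊢
      simp only [feedback, channel, LinearMap.add_apply, LinearMap.comp_apply, map_add] at hstep ⊢
      linear_combination (norm := module) hstep
  refine ⟨f, fun s => by rw [hstate], fun s => ?_⟩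
  have hout := congrArg S.C (hstate s)
  simp only [closed, output_apply, f] at hout ⊢
  simp only [feedback, channel, LinearMap.add_apply, LinearMap.comp_apply, map_add] at hout ⊢
  linear_combination (norm := module) -hout

lemma feedback_channel_markov_eq_zero (h : ∀ i < k, (S.channel b e).markov i = 0) :
    ∀ i < k, ((S.feedback b e ξ).channel b e).markov i = 0 := by
  intro i hi
  ext v
  obtain ⟨f, -, hf⟩ := S.exists_output_feedback (b := b) (e := e) (ξ := ξ) 0 0 (Pi.single 0 v)
  have hi' := hf i
  rw [output_eq_zero_of_markov h hi, Prod.mk_zero_zero, map_zero, map_zero, zero_add,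
    add_zero] at hi'
  rw [← output_single_add _ 0, zero_add, hi', LinearMap.zero_apply]

/-- If `k + j` closed-loop outputs vanish, then so do the open-loop ones before the channel
responds, hence all of them; the channel response shows that `j` samples of `ξ x` vanish too. -/
lemma feedback_unobservable_eq_bot [FiniteDimensional K X] {j : ℕ}
    (h : ∀ i < S.lag, (S.channel b e).markov i = 0)
    (hinj : Function.Injective ((S.channel b e).markov S.lag))
    (hξ : ∀ z, S.freeResponse z = 0 → (∀ i < j, ξ ((S.A ^ i) z) = 0) → z = 0) :
    (S.feedback b e ξ).unobservable (S.lag + j) = ⊥ := by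
  refine (Submodule.eq_bot_iff _).2 fun z hz => ?_
  rw [mem_unobservable] at hz
  obtain ⟨f, hf, hout⟩ := S.exists_output_feedback (b := b) (e := e) (ξ := ξ) z 0 0
  simp only [output_zero_right, Prod.mk_zero_zero, map_zero, add_zero, Pi.zero_apply] at hout hf
  have hfree : S.freeResponse z = 0 := freeResponse_eq_zero_of_lag fun i hi => by
    simpa [output_eq_zero_of_markov h hi, hz i (by lia)] using (hout i).symm
  have hf_zero : ∀ i < j, f i = 0 := eq_zero_of_output_eq_zero h hinj fun i hi => by
    simpa [hfree, hz i hi] using (hout i).symm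
  refine hξ z hfree fun i hi => ?_
  have hi' := hf i
  rwa [hf_zero i hi, state_eq_zero fun r hr => hf_zero r (hr.trans hi), add_zero,
    state_eq_add, Prod.mk_zero_zero, map_zero, add_zero, eq_comm] at hi'

/-- Moving the input `η i (u (s + i))` back to time `s` changes the state by the response of the
channel to the intermediate samples, whose outputs vanish before time `k`. -/
lemma exists_output_feedforward (h : ∀ i < k, (S.channel b e).markov i = 0) (x : X) (u : ℕ → U) :
    ∃ x', ∀ s, (S.feedforward b e η k).output s (x', u) = S.output s (x, u) +
      (S.channel b e).output s (0, fun s => ∑ i ∈ Finset.range (k + 1), η i (u (s + i))) := by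
  set G := S.channel b e
  set g : ℕ → V := fun s => ∑ i ∈ Finset.range (k + 1), η i (u (s + i))
  let v (s i l : ℕ) : V := η i (u (s + l))
  let shift (s : ℕ) : X := ∑ i ∈ Finset.range (k + 1), G.state i (0, v s i)
  have hv (s i : ℕ) : (fun l => v s i (l + 1)) = v (s + 1) i :=
    funext fun l => by simp only [v, add_assoc, add_comm 1]
  have hstate (s : ℕ) : (S.feedforward b e η k).state s (x - shift 0, u) + shift s =
      S.state s (x, u) + G.state s (0, g) := by
    induction s with
    | zero => simp
    | succ s ih =>
      have hstep := congrArg S.A ih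
      have hsum := Finset.sum_congr rfl fun i (_ : i ∈ Finset.range (k + 1)) =>
        G.state_shift_zero_add i (v s i)
      simp only [Finset.sum_add_distrib, hv] at hsum
      simp only [state_succ]
      simp only [feedforward, LinearMap.add_apply, LinearMap.sum_apply, LinearMap.comp_apply,
        map_add, map_sum, g, shift, v, G, channel, add_zero] at hstep hsum ⊢
      linear_combination (norm := module) hstep + hsum
  have hout (s : ℕ) :
      ∑ i ∈ Finset.range (k + 1), G.output i (0, v s i) = G.markov k (η k (u s)) := by
    rw [Finset.sum_range_succ, Finset.sum_eq_zero fun i hi =>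
      output_eq_zero_of_markov h (Finset.mem_range.1 hi), zero_add]
    exact output_eq_markov (j := 0) h (by simp)
  refine ⟨x - shift 0, fun s => ?_⟩
  have hs := congrArg S.C (hstate s)
  have hsum := hout s
  simp only [output_apply, Finset.sum_add_distrib] at hsum ⊢
  simp only [feedforward, LinearMap.add_apply, LinearMap.comp_apply, map_add, map_sum, g, shift, v,
    G, channel] at hs hsum ⊢
  linear_combination (norm := module) hs - hsum

/-- The system `S` with the signal `ξ (x s) + η 0 (u s) + ⋯ + η k (u (s + k))` fed into the channel
given by `b` and `e`. -/
def perturb (b : V →ₗ[K] X) (e : V →ₗ[K] Y) (ξ : X →ₗ[K] V) (η : ℕ → U →ₗ[K] V) (k : ℕ) :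
    StateSpace K U X Y :=
  (S.feedback b e ξ).feedforward b e η k

lemma exists_output_perturb (h : ∀ i < k, (S.channel b e).markov i = 0) (x : X) (u : ℕ → U) :
    ∃ (x' : X) (f : ℕ → V), (∀ s, f s = ξ (S.state s (x, u) + (S.channel b e).state s (0, f)) +
      ∑ i ∈ Finset.range (k + 1), η i (u (s + i))) ∧
    ∀ s, (S.perturb b e ξ η k).output s (x', u) =
      S.output s (x, u) + (S.channel b e).output s (0, f) := by
  obtain ⟨x', hx'⟩ := (S.feedback b e ξ).exists_output_feedforward (η := η)
    (S.feedback_channel_markov_eq_zero h) x u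
  obtain ⟨f, hf, hout⟩ := S.exists_output_feedback (b := b) (e := e) (ξ := ξ) x u
    fun s => ∑ i ∈ Finset.range (k + 1), η i (u (s + i))
  exact ⟨x', f, hf, fun s => (hx' s).trans (hout s)⟩

variable {x : X} {t : ℕ} {u : ℕ → U} {y : ℕ → Y}

/-- The functional `(ξ, η)` on states and input windows of length `k + 1` vanishes along the part of
a trajectory before time `t`. -/
def Annihilates (x : X) (u : ℕ → U) (t : ℕ) (ξ : X →ₗ[K] V) (η : ℕ → U →ₗ[K] V) (k : ℕ) : Prop :=
  ∀ s, s + k < t → ξ (S.state s (x, u)) + ∑ i ∈ Finset.range (k + 1), η i (u (s + i)) = 0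

variable {S}

/-- The signal fed into the channel vanishes as long as the data determine it, and later values
reach the output only after time `t`. -/
lemma Generates.exists_generates_perturb (hgen : S.Generates x t u y)
    (hann : S.Annihilates x u t ξ η k) (h : ∀ i < k, (S.channel b e).markov i = 0) :
    ∃ x', (S.perturb b e ξ η k).Generates x' t u y := by
  obtain ⟨x', f, hf, hout⟩ := S.exists_output_perturb (ξ := ξ) (η := η) h x u
  have hf_zero : ∀ s, s + k < t → f s = 0 := by
    intro s
    induction s using Nat.strong_induction_on with
    | _ s ih =>
      intro hs
      rw [hf, state_eq_zero fun i hi => ih i hi (by lia), add_zero, hann s hs]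
  refine ⟨x', fun s hs => ?_⟩
  rw [hout, hgen s hs, add_eq_left]
  obtain hsk | ⟨r, rfl⟩ := (lt_or_ge s k).imp_right Nat.exists_eq_add_of_le
  · exact output_eq_zero_of_markov h hsk
  · rw [output_eq_markov h fun i hi => hf_zero i (by lia), hf_zero r (by lia), map_zero]

/-- A change of the initial state cannot compensate for the first output of the channel: before the
channel responds, the compensating state produces no output, hence never does. -/
lemma markov_perturb_ne [FiniteDimensional K X]
    (hc : (S.perturb b e ξ η S.lag).IsControllable)
    (h : ∀ i < S.lag, (S.channel b e).markov i = 0)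
    (hinj : Function.Injective ((S.channel b e).markov S.lag))
    (hne : ξ ≠ 0 ∨ ∃ i ≤ S.lag, η i ≠ 0) : (S.perturb b e ξ η S.lag).markov ≠ S.markov := by
  intro hmarkov
  have hzero (x : X) (u : ℕ → U) :
      ξ x + ∑ i ∈ Finset.range (S.lag + 1), η i (u i) = 0 := by
    obtain ⟨x', f, hf, hout⟩ := S.exists_output_perturb (ξ := ξ) (η := η) h x u
    obtain ⟨z, hz⟩ := range_freeResponse_le hc hmarkov ⟨x', rfl⟩
    have hdiff (s : ℕ) : S.freeResponse (z - x) s = (S.channel b e).output s (0, f) := by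
      have hs := hout s
      rw [output_eq, output_eq, hmarkov, ← hz, add_right_comm, add_left_inj] at hs
      rw [map_sub, Pi.sub_apply, hs, add_sub_cancel_left]
    have hfree : S.freeResponse (z - x) = 0 := freeResponse_eq_zero_of_lag fun i hi => by
      rw [hdiff, output_eq_zero_of_markov h hi]
    have hf_zero : f 0 = 0 := eq_zero_of_output_eq_zero (j := 1) h hinj
      (fun i _ => by rw [← hdiff, hfree, Pi.zero_apply]) 0 one_pos
    simpa [hf_zero] using (hf 0).symm
  obtain hξ | ⟨i, hi, hη⟩ := hne
  · exact hξ (LinearMap.ext fun x => by simpa using hzero x 0)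
  · refine hη (LinearMap.ext fun w => ?_)
    have hw := hzero 0 (Pi.single i w)
    rw [map_zero, zero_add, Finset.sum_eq_single i] at hw
    · simpa using hw
    · intro r _ hr
      rw [Pi.single_eq_of_ne hr, map_zero]
    · intro hi'
      exact absurd (Finset.mem_range.2 (by lia)) hi'

lemma perturb_unobservable_eq_bot [FiniteDimensional K X] {j : ℕ}
    (h : ∀ i < S.lag, (S.channel b e).markov i = 0)
    (hinj : Function.Injective ((S.channel b e).markov S.lag))
    (hξ : ∀ z, S.freeResponse z = 0 → (∀ i < j, ξ ((S.A ^ i) z) = 0) → z = 0) :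
    (S.perturb b e ξ η k).unobservable (S.lag + j) = ⊥ :=
  S.feedback_unobservable_eq_bot h hinj hξ

variable (S) in
lemma exists_channel [Nontrivial Y] : ∃ (b : K →ₗ[K] X) (e : K →ₗ[K] Y),
    (∀ i < S.lag, (S.channel b e).markov i = 0) ∧
    Function.Injective ((S.channel b e).markov S.lag) := by
  rcases hlag : S.lag with _ | l
  · obtain ⟨v, hv⟩ := exists_ne (0 : Y)
    exact ⟨0, LinearMap.toSpanSingleton K Y v, by simp, smul_left_injective K hv⟩
  · have hne : S.unobservable (l + 1) ≠ S.unobservable l :=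
      Nat.notMem_of_lt_sInf (hlag ▸ l.lt_succ_self : l < S.lag)
    obtain ⟨v, hv, hv'⟩ := SetLike.exists_of_lt
      (lt_of_le_of_ne (S.unobservable_antitone l.le_succ) hne)
    have hmarkov (i : ℕ) (c : K) :
        (S.channel (.toSpanSingleton K X v) 0).markov (i + 1) c = c • S.freeResponse v i := by
      rw [markov_succ_apply, ← Pi.smul_apply, ← map_smul]
      rfl
    have hl : S.freeResponse v l ≠ 0 := fun h => hv' <| mem_unobservable.2 fun i hi =>
      (Nat.lt_succ_iff_lt_or_eq.1 hi).elim (mem_unobservable.1 hv i) (· ▸ h)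
    refine ⟨LinearMap.toSpanSingleton K X v, 0, fun i hi => ?_, ?_⟩
    · cases i with
      | zero => rfl
      | succ i => ext; rw [hmarkov, mem_unobservable.1 hv i (by lia), smul_zero]; rfl
    · rw [funext (hmarkov l)]
      exact smul_left_injective K hl

lemma exists_annihilates (h : S.stateInputSpan x u k t ≠ ⊤) :
    ∃ (ξ : Module.Dual K X) (η : ℕ → Module.Dual K U),
      S.Annihilates x u t ξ η k ∧ (ξ ≠ 0 ∨ ∃ i ≤ k, η i ≠ 0) := by
  obtain ⟨Φ, hΦ, hle⟩ := Submodule.exists_le_ker_of_lt_top _ h.lt_top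
  let ξ : Module.Dual K X := Φ ∘ₗ LinearMap.inl K X _
  let η (i : ℕ) : Module.Dual K U :=
    Φ ∘ₗ LinearMap.inr K X _ ∘ₗ LinearMap.single K (fun _ => U) (Fin.ofNat (k + 1) i)
  have hΦ_apply (z : X) (w : Fin (k + 1) → U) : Φ (z, w) = ξ z + ∑ i : Fin (k + 1), η i (w i) := by
    simp only [ξ, η, LinearMap.comp_apply, ← map_sum, ← map_add]
    simp [Finset.univ_sum_single]
  refine ⟨ξ, η, fun s hs => ?_, ?_⟩
  · rw [Finset.sum_range]
    exact (hΦ_apply _ (window u k s)).symm.trans (hle (Submodule.subset_span ⟨s, hs, rfl⟩))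
  · by_contra! hzero
    refine hΦ (LinearMap.ext fun z => ?_)
    rw [hΦ_apply, hzero.1, Finset.sum_eq_zero fun i _ => by
      rw [hzero.2 i (Nat.le_of_lt_succ i.2), LinearMap.zero_apply], add_zero]
    rfl

end StateSpace

/-! ### Appending states that do not influence the output -/

namespace StateSpace

variable {K U X Y : Type*} [Field K] [AddCommGroup U] [Module K U]
  [AddCommGroup X] [Module K X] [AddCommGroup Y] [Module K Y] (S : StateSpace K U X Y)

/-- The system `S` extended by a scalar state `z` with `z (s + 1) = ξ (x s) + r z s + β (u s)` that
does not influence the output. -/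
def cascade (ξ : Module.Dual K X) (β : Module.Dual K U) (r : K) : StateSpace K U (X × K) Y where
  A := (S.A ∘ₗ LinearMap.fst K X K).prod (ξ.coprod (r • LinearMap.id))
  B := S.B.prod β
  C := S.C ∘ₗ LinearMap.fst K X K
  D := S.D

variable {ξ : Module.Dual K X} {β : Module.Dual K U} {r : K}

lemma cascade_A_apply (z : X × K) :
    (S.cascade ξ β r).A z = (S.A z.1, ξ z.1 + r * z.2) := rfl

lemma cascade_state_fst (s : ℕ) (z : X × K) (u : ℕ → U) :
    ((S.cascade ξ β r).state s (z, u)).1 = S.state s (z.1, u) := by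
  induction s with
  | zero => rfl
  | succ s ih => rw [state_succ, state_succ, ← ih]; rfl

lemma cascade_output (s : ℕ) (z : X × K) (u : ℕ → U) :
    (S.cascade ξ β r).output s (z, u) = S.output s (z.1, u) := by
  rw [output_apply, output_apply, ← S.cascade_state_fst]
  rfl

lemma cascade_freeResponse (z : X × K) :
    (S.cascade ξ β r).freeResponse z = S.freeResponse z.1 :=
  funext fun i => by rw [← output_zero_right, ← output_zero_right, cascade_output]

lemma cascade_markov : (S.cascade ξ β r).markov = S.markov :=
  funext fun i => LinearMap.ext fun w => by
    rw [← output_single_add _ 0, ← output_single_add _ 0, cascade_output, Prod.fst_zero]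

lemma cascade_A_pow_fst (i : ℕ) (z : X × K) :
    (((S.cascade ξ β r).A ^ i) z).1 = (S.A ^ i) z.1 := by
  have h := S.cascade_state_fst (ξ := ξ) (β := β) (r := r) i z 0
  rwa [state_eq_add, state_eq_add S, Prod.mk_zero_zero, Prod.mk_zero_zero, map_zero, map_zero,
    add_zero, add_zero] at h

lemma cascade_lag : (S.cascade ξ β r).lag = S.lag := by
  have hcomap (k : ℕ) :
      (S.cascade ξ β r).unobservable k = (S.unobservable k).comap (LinearMap.fst K X K) := by
    ext z
    simp only [mem_unobservable, Submodule.mem_comap, cascade_freeResponse, LinearMap.fst_apply]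
  have hinj := Submodule.comap_injective_of_surjective (LinearMap.fst_surjective (R := K) (M := X)
    (M₂ := K))
  simp only [lag, hcomap, hinj.eq_iff]

/-- The samples of the appended state resolve one more sample of `ξ` each, since `z 0 = 0`. -/
lemma cascade_eq_zero {j : ℕ}
    (hξ : ∀ x, S.freeResponse x = 0 → (∀ i < j, ξ ((S.A ^ i) x) = 0) → x = 0)
    (z : X × K) (hz : (S.cascade ξ β r).freeResponse z = 0)
    (hsnd : ∀ i < j + 1, (((S.cascade ξ β r).A ^ i) z).2 = 0) : z = 0 := by
  refine Prod.ext (hξ z.1 (by rwa [cascade_freeResponse] at hz) fun i hi => ?_) (hsnd 0 j.succ_pos)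
  have hsucc := hsnd (i + 1) (by lia)
  rwa [pow_succ', Module.End.mul_apply, cascade_A_apply, hsnd i (by lia), mul_zero, add_zero,
    cascade_A_pow_fst] at hsucc

variable {S}

lemma Generates.cascade {t : ℕ} {x : X} {u : ℕ → U} {y : ℕ → Y} (h : S.Generates x t u y) (z : K) :
    (S.cascade ξ β r).Generates (x, z) t u y :=
  fun s hs => (S.cascade_output s (x, z) u).trans (h s hs)

/-- The reachable states project onto `X`. If they satisfied a linear relation, it would have to be
of the form `z = τ x`, and this relation would be invariant. -/
lemma IsControllable.cascade (hc : S.IsControllable)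
    (h : ¬∃ τ : Module.Dual K X, (∀ x, τ (S.A x) = ξ x + r * τ x) ∧ ∀ w, τ (S.B w) = β w) :
    (S.cascade ξ β r).IsControllable := by
  refine isControllable_iff.2 fun ψ hψ => ?_
  set c := ψ (0, 1)
  set φ : Module.Dual K X := ψ ∘ₗ LinearMap.inl K X K
  have hψ_apply (z : X × K) : ψ z = φ z.1 + z.2 * c := by
    rw [← smul_eq_mul, ← map_smul]
    simp [φ, ← map_add]
  have hc_zero : c = 0 := by
    by_contra hc_ne
    let τ : Module.Dual K X := -c⁻¹ • φ
    have hsnd (i : ℕ) (w : U) :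
        τ ((S.A ^ i) (S.B w)) = (((S.cascade ξ β r).A ^ i) ((S.cascade ξ β r).B w)).2 := by
      have hiw := hψ i w
      rw [hψ_apply, cascade_A_pow_fst, add_eq_zero_iff_eq_neg] at hiw
      change -c⁻¹ * φ ((S.A ^ i) ((S.cascade ξ β r).B w).1) = _
      rw [hiw]
      field_simp
    refine h ⟨τ, fun x => ?_, fun w => hsnd 0 w⟩
    suffices τ ∘ₗ S.A = ξ + r • τ from LinearMap.congr_fun this x
    refine LinearMap.ext_on_range hc fun iw => ?_
    have hsucc := hsnd (iw.1 + 1) iw.2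
    rw [pow_succ', pow_succ', Module.End.mul_apply, Module.End.mul_apply, cascade_A_apply,
      ← hsnd, cascade_A_pow_fst] at hsucc
    exact hsucc
  have hφ : φ = 0 := isControllable_iff.1 hc _ fun i w => by
    have hiw := hψ i w
    rwa [hψ_apply, hc_zero, mul_zero, add_zero, cascade_A_pow_fst] at hiw
  exact LinearMap.ext fun z => by simp [hψ_apply, hφ, hc_zero]

/-- Synthetic division by `σ - r` of the polynomial in `σ` with coefficients `η`. -/
lemma exists_quotient {M : Type*} [AddCommGroup M] [Module K M] (r : K) (η : ℕ → M) (k : ℕ) :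
    ∃ η' : ℕ → M, ∑ i ∈ Finset.range (k + 1), r ^ i • η i = η 0 + r • η' 0 ∧
      (∀ i < k, η (i + 1) = η' i - r • η' (i + 1)) ∧ η' k = 0 := by
  refine ⟨fun i => ∑ j ∈ Finset.range (k - i), r ^ j • η (i + 1 + j), ?_, fun i hi => ?_, by simp⟩
  · rw [Finset.sum_range_succ', add_comm]
    simp [Finset.smul_sum, smul_smul, pow_succ', add_comm]
  · obtain ⟨l, rfl⟩ := Nat.exists_eq_add_of_lt hi
    beta_reduce
    rw [show i + l + 1 - i = l + 1 by lia, show i + l + 1 - (i + 1) = l by lia,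
      Finset.sum_range_succ']
    simp [Finset.smul_sum, smul_smul, pow_succ', add_comm, add_left_comm]

/-- Read `η` as a polynomial in the shift `σ`. Its remainder modulo `σ - r` is the input map of the
appended state, and the quotient, negated, satisfies the recursion of the appended state. -/
lemma Annihilates.exists_cascade {x : X} {u : ℕ → U} {t k : ℕ} {η : ℕ → Module.Dual K U}
    (h : S.Annihilates x u t ξ η (k + 1)) (r : K) : ∃ (z : K) (η' : ℕ → Module.Dual K U),
    (S.cascade ξ (∑ i ∈ Finset.range (k + 2), r ^ i • η i) r).Annihilates (x, z) u t
      (LinearMap.snd K X K) η' k := by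
  obtain ⟨η', hβ, hη', hlast⟩ := exists_quotient r η (k + 1)
  rw [hβ]
  let q (s : ℕ) : K := ∑ i ∈ Finset.range (k + 1), η' i (u (s + i))
  have hq (s : ℕ) : ∑ i ∈ Finset.range (k + 2), η i (u (s + i)) =
      q (s + 1) - r * q s + (η 0 + r • η' 0) (u s) := by
    have hsum : ∑ i ∈ Finset.range (k + 1), η (i + 1) (u (s + (i + 1))) =
        q (s + 1) - r * ∑ i ∈ Finset.range (k + 1), η' (i + 1) (u (s + (i + 1))) := by
      rw [Finset.mul_sum, ← Finset.sum_sub_distrib]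
      refine Finset.sum_congr rfl fun i hi => ?_
      rw [hη' i (Finset.mem_range.1 hi), add_assoc, add_comm 1]
      rfl
    have hshift : ∑ i ∈ Finset.range (k + 1), η' (i + 1) (u (s + (i + 1))) + η' 0 (u s) = q s := by
      have hsum' := Finset.sum_range_succ' (fun i => η' i (u (s + i))) (k + 1)
      rw [Finset.sum_range_succ, hlast, LinearMap.zero_apply, add_zero] at hsum'
      exact hsum'.symm
    rw [Finset.sum_range_succ', hsum, ← hshift, LinearMap.add_apply, LinearMap.smul_apply,
      smul_eq_mul, add_zero]
    ring
  refine ⟨-q 0, η', fun s hs => ?_⟩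
  rw [LinearMap.snd_apply, ← eq_neg_iff_add_eq_zero]
  change _ = -q s
  induction s with
  | zero => rfl
  | succ s ih =>
    have hs' := h s (by lia)
    rw [state_succ, Prod.snd_add, cascade_A_apply, cascade_state_fst, ih (by lia)]
    change _ + (η 0 + r • η' 0) (u s) = _
    linear_combination hs' - hq s

end StateSpace

/-! ### Controllability of the modified systems -/

namespace StateSpace

open Filter Topology

variable {U X Y : Type*} [AddCommGroup U] [Module ℝ U] [NormedAddCommGroup X] [NormedSpace ℝ X]
  [AddCommGroup Y] [Module ℝ Y]

section Continuity

variable {T : Type*} [TopologicalSpace T] {S : T → StateSpace ℝ U X Y}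

lemma continuous_A_pow_apply (hA : Continuous fun p : T × X => (S p.1).A p.2) {v : T → X}
    (hv : Continuous v) (i : ℕ) : Continuous fun ε => ((S ε).A ^ i) (v ε) := by
  induction i with
  | zero => exact hv
  | succ i ih =>
    simp only [pow_succ', Module.End.mul_apply]
    exact hA.comp (continuous_id.prodMk ih)

lemma IsControllable.eventually [FiniteDimensional ℝ X] {ε₀ : T} (hc : (S ε₀).IsControllable)
    (hA : Continuous fun p : T × X => (S p.1).A p.2)
    (hB : ∀ w, Continuous fun ε => (S ε).B w) : ∀ᶠ ε in 𝓝 ε₀, (S ε).IsControllable := by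
  let reach (ε : T) (iw : ℕ × U) : X := ((S ε).A ^ iw.1) ((S ε).B iw.2)
  obtain ⟨κ, a, -, hspan, hli⟩ := exists_linearIndependent' ℝ (reach ε₀)
  have := hli.finite
  have := Fintype.ofFinite κ
  have hcard : Fintype.card κ = Module.finrank ℝ X := by
    rw [← finrank_span_eq_card hli, hspan, show Submodule.span ℝ _ = ⊤ from hc, finrank_top]
  have hreach : Continuous fun ε => reach ε ∘ a :=
    continuous_pi fun l => continuous_A_pow_apply hA (hB _) _
  filter_upwards [hreach.continuousAt.eventually hli.eventually] with ε hε
  rw [IsControllable, eq_top_iff, ← hε.span_eq_top_of_card_eq_finrank' hcard]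
  exact Submodule.span_mono (Set.range_comp_subset_range a (reach ε))

end Continuity

variable {S : StateSpace ℝ U X Y}

/-- Along `ε ↦ (ε ξ, ε η)`, controllability persists near `ε = 0`. -/
lemma exists_perturbation [Nontrivial Y] [FiniteDimensional ℝ X] {x : X} {t j : ℕ} {u : ℕ → U}
    {y : ℕ → Y} {ξ : Module.Dual ℝ X} {η : ℕ → Module.Dual ℝ U} (hc : S.IsControllable)
    (hgen : S.Generates x t u y) (hann : S.Annihilates x u t ξ η S.lag)
    (hne : ξ ≠ 0 ∨ ∃ i ≤ S.lag, η i ≠ 0)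
    (hξ : ∀ z, S.freeResponse z = 0 → (∀ i < j, ξ ((S.A ^ i) z) = 0) → z = 0) :
    ∃ S' : StateSpace ℝ U X Y, S'.IsControllable ∧ S'.unobservable (S.lag + j) = ⊥ ∧
      (∃ x', S'.Generates x' t u y) ∧ S'.markov ≠ S.markov := by
  obtain ⟨b, e, hzero, hinj⟩ := S.exists_channel
  let P (ε : ℝ) : StateSpace ℝ U X Y := S.perturb b e (ε • ξ) (ε • η) S.lag
  have hA : Continuous fun p : ℝ × X => (P p.1).A p.2 := by
    have hS := S.A.continuous_of_finiteDimensional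
    have hb := b.continuous_of_finiteDimensional
    have hξ' := ξ.continuous_of_finiteDimensional
    change Continuous fun p : ℝ × X => S.A p.2 + b (p.1 * ξ p.2)
    fun_prop
  have hB (w : U) : Continuous fun ε => (P ε).B w := by
    have hb := b.continuous_of_finiteDimensional
    change Continuous fun ε : ℝ =>
      (S.B + ∑ i ∈ Finset.range (S.lag + 1), ((P ε).A ^ i) ∘ₗ b ∘ₗ (ε • η i)) w
    simp only [LinearMap.add_apply, LinearMap.sum_apply, LinearMap.comp_apply,
      LinearMap.smul_apply]
    exact continuous_const.add <| continuous_finsetSum _ fun i _ =>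
      continuous_A_pow_apply hA (by fun_prop) i
  have hc₀ : (P 0).IsControllable := by
    simpa [P, perturb, feedback, feedforward, IsControllable] using hc
  obtain ⟨ε, hcε, hε⟩ := (((hc₀.eventually hA hB).filter_mono nhdsWithin_le_nhds).and
    (self_mem_nhdsWithin : {(0 : ℝ)}ᶜ ∈ 𝓝[≠] 0)).exists
  refine ⟨P ε, hcε, perturb_unobservable_eq_bot hzero hinj fun z hz hi => hξ z hz fun i hij => ?_,
    hgen.exists_generates_perturb (fun s hs => ?_) hzero, markov_perturb_ne hcε hzero hinj ?_⟩
  · exact (mul_eq_zero.1 (hi i hij)).resolve_left hε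
  · simpa [← Finset.mul_sum, ← mul_add] using Or.inr (hann s hs)
  · exact hne.imp (smul_ne_zero hε) fun ⟨i, hi, hη⟩ => ⟨i, hi, smul_ne_zero hε hη⟩

lemma tendsto_zero_of_resolvent [FiniteDimensional ℝ X] (A : X →ₗ[ℝ] X) (ξ : Module.Dual ℝ X)
    (τ : ℝ → Module.Dual ℝ X) (h : ∀ r x, τ r (A x) = ξ x + r * τ r x) (x : X) :
    Tendsto (fun r => τ r x) atTop (𝓝 0) := by
  set A' := A.toContinuousLinearMap
  set ξ' := ξ.toContinuousLinearMap
  set τ' := fun r => (τ r).toContinuousLinearMap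
  have hbound : ∀ r > ‖A'‖, ‖τ' r‖ ≤ ‖ξ'‖ / (r - ‖A'‖) := by
    intro r hr
    have hτ' : r • τ' r = τ' r ∘L A' - ξ' :=
      ContinuousLinearMap.ext fun z => eq_sub_of_add_eq' (h r z).symm
    have hnorm : r * ‖τ' r‖ ≤ ‖τ' r‖ * ‖A'‖ + ‖ξ'‖ :=
      calc r * ‖τ' r‖ = ‖τ' r ∘L A' - ξ'‖ := by
            rw [← hτ', norm_smul, Real.norm_of_nonneg ((norm_nonneg A').trans hr.le)]
        _ ≤ ‖τ' r ∘L A'‖ + ‖ξ'‖ := norm_sub_le _ _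
        _ ≤ ‖τ' r‖ * ‖A'‖ + ‖ξ'‖ := by gcongr; exact ContinuousLinearMap.opNorm_comp_le _ _
    rw [le_div_iff₀ (sub_pos.2 hr)]
    linarith
  refine squeeze_zero_norm' (a := fun r => ‖ξ'‖ / (r - ‖A'‖) * ‖x‖) ?_ ?_
  · filter_upwards [eventually_gt_atTop ‖A'‖] with r hr
    exact (τ' r).le_of_opNorm_le (hbound r hr) x
  · have hlim := (tendsto_const_nhds (x := ‖ξ'‖)).div_atTop
      (tendsto_atTop_add_const_right atTop (-‖A'‖) tendsto_id)
    simpa [sub_eq_add_neg] using hlim.mul_const ‖x‖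

lemma eq_zero_of_tendsto_sum_pow {a : ℕ → ℝ} {k : ℕ}
    (h : Tendsto (fun r : ℝ => ∑ i ∈ Finset.range (k + 1), r ^ i * a i) atTop (𝓝 0)) :
    ∀ i ≤ k, a i = 0 := by
  let P : Polynomial ℝ := ∑ i ∈ Finset.range (k + 1), .monomial i (a i)
  have hP : P = 0 := by
    refine Polynomial.leadingCoeff_eq_zero.1 (P.tendsto_nhds_iff.1 ?_).1
    simpa [P, Polynomial.eval_finsetSum, mul_comm] using h
  intro i hi
  simpa [P, Polynomial.finsetSum_coeff, Polynomial.coeff_monomial, Nat.lt_succ_of_le hi]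
    using congrArg (Polynomial.coeff · i) hP

/-- Otherwise each `r` yields a functional `τ r` with `τ r ∘ A = ξ + r • τ r`. These tend to zero as
`r → ∞`, whereas `τ r ∘ B` is a polynomial in `r` with coefficients `η`. -/
lemma exists_controllable_cascade [FiniteDimensional ℝ X] (hc : S.IsControllable) {k : ℕ}
    {ξ : Module.Dual ℝ X} {η : ℕ → Module.Dual ℝ U} (hne : ξ ≠ 0 ∨ ∃ i ≤ k, η i ≠ 0) :
    ∃ r, (S.cascade ξ (∑ i ∈ Finset.range (k + 1), r ^ i • η i) r).IsControllable := by
  by_contra! h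
  choose τ hA hB using fun r => not_not.1 fun hr => h r (hc.cascade hr)
  have hτ := tendsto_zero_of_resolvent S.A ξ τ hA
  have hη : ∀ i ≤ k, η i = 0 := fun i hi => LinearMap.ext fun w =>
    eq_zero_of_tendsto_sum_pow (a := fun i => η i w) (by simpa [hB] using hτ (S.B w)) i hi
  have hξ_of (x : X) (hx : ∀ r, τ r x = 0) : ξ x = 0 :=
    by simpa [hA, hx] using hτ (S.A x)
  have hreach (i : ℕ) (w : U) : ∀ r, τ r ((S.A ^ i) (S.B w)) = 0 := by
    induction i with
    | zero =>
      intro r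
      rw [pow_zero, Module.End.one_apply, hB, Finset.sum_eq_zero fun i hi => by
        rw [hη i (Nat.lt_succ_iff.1 (Finset.mem_range.1 hi)), smul_zero], LinearMap.zero_apply]
    | succ i ih =>
      intro r
      rw [pow_succ', Module.End.mul_apply, hA, ih, hξ_of _ ih, mul_zero, add_zero]
  obtain hξ | ⟨i, hi, hηi⟩ := hne
  · exact hξ (isControllable_iff.1 hc ξ fun i w => hξ_of _ (hreach i w))
  · exact hηi (hη i hi)

end StateSpace

/-! ### Necessity -/

section Necessity

variable {m p : ℕ} {t L N : ℕ} {u : ℕ → Fin m → ℝ} {y : ℕ → Fin p → ℝ}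

open StateSpace hiding lag

lemma exists_minimalSys {X : Type*} [AddCommGroup X] [Module ℝ X] [FiniteDimensional ℝ X]
    {S : StateSpace ℝ (Fin m → ℝ) X (Fin p → ℝ)} {x : X} {k : ℕ} (hc : S.IsControllable)
    (hbot : S.unobservable k = ⊥) (hgen : S.Generates x t u y) :
    ∃ sys : LinSys m p, MinimalSys sys ∧ Explains sys t u y ∧ lag sys ≤ k ∧
      sys.n = Module.finrank ℝ X ∧ sys.toStateSpace.markov = S.markov := by
  have hbot' := LinSys.toStateSpace_realize S ▸ map_unobservable_eq_bot_iff.2 hbot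
  refine ⟨LinSys.realize S, LinSys.minimalSys_iff.2
    ⟨?_, IsObservable.of_unobservable_eq_bot hbot'⟩, LinSys.explains_iff.2
    ⟨(Module.finBasis ℝ X).equivFun x, ?_⟩, ?_, rfl, ?_⟩
  · exact LinSys.toStateSpace_realize S ▸ hc.map
  · exact LinSys.toStateSpace_realize S ▸ hgen.map
  · exact LinSys.lag_toStateSpace _ ▸ lag_le_of_unobservable_eq_bot hbot'
  · exact LinSys.toStateSpace_realize S ▸ map_markov

/-- Appending `d` states that do not influence the output reduces the annihilator to one that
involves the inputs over `lag + 1` steps only; then the system can be perturbed. The lag grows by at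
most one with each appended state. -/
lemma exists_alternative [NeZero p] (d : ℕ) : ∀ {X : Type} [NormedAddCommGroup X]
    [NormedSpace ℝ X] [FiniteDimensional ℝ X] {S : StateSpace ℝ (Fin m → ℝ) X (Fin p → ℝ)} {x : X}
    {j : ℕ} {ξ : Module.Dual ℝ X} {η : ℕ → Module.Dual ℝ (Fin m → ℝ)}, S.IsControllable →
    S.Generates x t u y → S.Annihilates x u t ξ η (S.lag + d) →
    (ξ ≠ 0 ∨ ∃ i ≤ S.lag + d, η i ≠ 0) →
    (∀ z, S.freeResponse z = 0 → (∀ i < j, ξ ((S.A ^ i) z) = 0) → z = 0) →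
    ∃ sys : LinSys m p, MinimalSys sys ∧ Explains sys t u y ∧ lag sys ≤ S.lag + j + d ∧
      sys.n = Module.finrank ℝ X + d ∧ sys.toStateSpace.markov ≠ S.markov := by
  induction d with
  | zero =>
    intro X _ _ _ S x j ξ η hc hgen hann hne hξ
    obtain ⟨S', hc', hbot, ⟨x', hgen'⟩, hmarkov⟩ := exists_perturbation hc hgen hann hne hξ
    obtain ⟨sys, hmin, hexpl, hlag, hn, hsys⟩ := exists_minimalSys hc' hbot hgen'
    exact ⟨sys, hmin, hexpl, hlag, hn, hsys ▸ hmarkov⟩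
  | succ d ih =>
    intro X _ _ _ S x j ξ η hc hgen hann hne hξ
    obtain ⟨r, hc'⟩ := exists_controllable_cascade hc hne
    obtain ⟨z, η', hann'⟩ := hann.exists_cascade r
    have hsnd : LinearMap.snd ℝ X ℝ ≠ 0 := fun h =>
      one_ne_zero (α := ℝ) (LinearMap.congr_fun h (0, 1))
    obtain ⟨sys, hmin, hexpl, hlag, hn, hmarkov⟩ := ih hc' (hgen.cascade z)
      (by rw [cascade_lag]; exact hann') (.inl hsnd)
      (S.cascade_eq_zero hξ)
    rw [cascade_lag] at hlag
    rw [Module.finrank_prod, Module.finrank_self] at hn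
    exact ⟨sys, hmin, hexpl, by lia, by lia, S.cascade_markov ▸ hmarkov⟩

variable {sysT : LinSys m p}

lemma stateInputSpan_eq_top_of_informative [NeZero p] (hT : sysT ∈ Candidates t u y L N)
    (hI : Informative t u y sysT.n L N) {x : Fin sysT.n → ℝ}
    (hx : sysT.toStateSpace.Generates x t u y) {d : ℕ} (hL : lag sysT + d ≤ L)
    (hN : sysT.n + d ≤ N) : sysT.toStateSpace.stateInputSpan x u (lag sysT + d) t = ⊤ := by
  by_contra hspan
  obtain ⟨hc, ho⟩ := LinSys.minimalSys_iff.1 hT.1.2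
  rw [← LinSys.lag_toStateSpace] at hspan
  obtain ⟨ξ, η, hann, hne⟩ := exists_annihilates hspan
  obtain ⟨sys, hmin, hexpl, hlag, hn, hmarkov⟩ := exists_alternative d (j := 0) hc hx hann hne
    fun z hz _ => ho (hz.trans (map_zero _).symm)
  rw [LinSys.lag_toStateSpace] at hlag
  rw [Module.finrank_fin_fun] at hn
  have hsys : sys ∈ Candidates t u y L N := ⟨⟨hexpl, hmin⟩, hlag.trans hL, hn.trans_le hN⟩
  obtain ⟨e, he⟩ := LinSys.isomorphic_iff.1 (hI.2 sysT hT sys hsys)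
  exact hmarkov (by rw [he, map_markov])

lemma rank_Hkt_of_informative [NeZero p] (hT : sysT ∈ Candidates t u y L N)
    (hI : Informative t u y sysT.n L N) :
    (Hkt u y (lagBound t u y L N) t).rank = (lagBound t u y L N + 1) * m + nMin t u y := by
  obtain ⟨x, hx⟩ := LinSys.explains_iff.1 hT.1.1
  have hrank (d : ℕ) (hL : lag sysT + d ≤ L) (hN : sysT.n + d ≤ N) :
      (Hkt u y (lag sysT + d) t).rank = (lag sysT + d + 1) * m + sysT.n := by
    have ho := (LinSys.minimalSys_iff.1 hT.1.2).2
    rw [← Module.finrank_fin_fun ℝ (n := sysT.n), rank_Hkt_eq_iff hx]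
    exact ⟨stateInputSpan_eq_top_of_informative hT hI hx hL hN,
      ho.unobservable_eq_bot (by rw [LinSys.lag_toStateSpace]; lia)⟩
  have hn : sysT.n = nMin t u y := by
    obtain ⟨sys₀, h₀, hn₀⟩ := exists_n_eq_nMin hT.1.1
    obtain ⟨x₀, hx₀⟩ := LinSys.explains_iff.1 h₀
    have hle := rank_Hkt_le hx₀ (k := lag sysT)
    rw [Module.finrank_fin_fun, hn₀, ← add_zero (lag sysT), hrank 0 hT.2.1 hT.2.2] at hle
    exact (Nat.le_of_add_le_add_left hle).antisymm (nMin_le hT.1.1)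
  have hl : lag sysT = lMin t u y := by
    obtain ⟨sysl, hsysl, hlag⟩ := exists_lag_eq_lMin hT.1.1
    obtain ⟨xl, hxl⟩ := LinSys.explains_iff.1 hsysl
    refine (lMin_le hT.1.1).antisymm' ?_
    rw [← hlag, ← LinSys.lag_toStateSpace, ← LinSys.lag_toStateSpace]
    refine lag_le_lag hx hxl (stateInputSpan_eq_top_of_le _ ?_
      (stateInputSpan_eq_top_of_informative (d := 0) hT hI hx hT.2.1 hT.2.2))
    rw [LinSys.lag_toStateSpace, hlag]
    exact lMin_le hT.1.1
  obtain ⟨hlagL, hnN⟩ : lag sysT ≤ L ∧ sysT.n ≤ N := hT.2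
  have hbound : lagBound t u y L N = lag sysT + min (L - lag sysT) (N - sysT.n) := by
    rw [lagBound, ← hn, ← hl]
    lia
  rw [hbound, ← hn]
  exact hrank _ (by lia) (by lia)

lemma le_of_rank_Hkt (hm : 1 ≤ m) {k n : ℕ} (h : (Hkt u y k t).rank = (k + 1) * m + n) :
    k + (k + 1) * m + n ≤ t := by
  have hle : (Hkt u y k t).rank ≤ t - k := by simpa using (Hkt u y k t).rank_le_card_width
  lia

end Necessity

/-- **Theorem 1 (characterization of informativity).** The data, generated by a
minimal true system with `ℓ_true ≤ L` and `n_true ≤ N`, are informative for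
system identification iff `t ≥ L_t^a + (L_t^a + 1)m + n_min,t` and
`rank H_{L_t^a,t} = (L_t^a + 1)m + n_min,t`, where
`L_t^a = min(L, N - n_min,t + ℓ_min,t)`. -/
theorem informative_iff {m p : ℕ} (hm : 1 ≤ m) (hp : 1 ≤ p)
    (t L N : ℕ) (u : ℕ → Fin m → ℝ) (y : ℕ → Fin p → ℝ)
    (hu : ∃ s < t, u s ≠ 0)
    (sysT : LinSys m p) (hmin : MinimalSys sysT) (hdata : Explains sysT t u y)
    (hL : lag sysT ≤ L) (hN : sysT.n ≤ N) :
    Informative t u y sysT.n L N ↔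
      (min L (N - nMin t u y + lMin t u y) +
          (min L (N - nMin t u y + lMin t u y) + 1) * m + nMin t u y ≤ t ∧
        (Hkt u y (min L (N - nMin t u y + lMin t u y)) t).rank =
          (min L (N - nMin t u y + lMin t u y) + 1) * m + nMin t u y) := by
  have hT : sysT ∈ Candidates t u y L N := ⟨⟨hdata, hmin⟩, hL, hN⟩
  have : NeZero p := ⟨by lia⟩
  refine ⟨fun hI => ?_, fun ⟨_, hrank⟩ => informative_of_rank_Hkt hT hrank⟩
  have hrank := rank_Hkt_of_informative hT hI
  exact ⟨le_of_rank_Hkt hm hrank, hrank⟩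
end
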